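/- For all constants K ≥ 1 and c > 0 there exist constants C > 0 and δ > 0 with the following property. Let 𝐝 = (d_1,…,d_n) be a degree sequence with even sum M and maximum entry Δ satisfying Δ² ≤ δM. Let H₁ and H₂ be edge-disjoint graphs on [n] with 𝐝^{H₁} ⪯ 𝐝 and Δ_{H₂} ≤ KΔ. Set 𝐝̃ = 𝐝 − 𝐝^{H₁}, M̃ = Σ_i d̃_i, M̃₂ = Σ_i d̃_i(d̃_i − 1), and suppose M̃ ≥ cM. Let u ≠ v with uv ∉ H₁ ∪ H₂, and suppose the set of graphs with degree sequence 𝐝 containing H₁ and avoiding all edges of H₂ is nonempty. Then P(uv ∈ 𝒢(n,𝐝) | H₁⁺, H₂⁻) = (1 + θ)·(d̃_u d̃_v/M̃)·(1 − M̃₂²/M̃³ − M̃₂/M̃² − Σ_{(x,y)∈𝒲} d̃_x d̃_y/M̃²)·(1 − φ̄_{H₁}(uv)/(M − 2|H₁|)) for some real θ with |θ| ≤ C·Δ⁵n/M³, where φ̄_{H₁}(uv) = −2(d̃_u + d̃_v) + 2 − Σ_{x∈N_{H₁∪H₂}(u)} d̃_x − Σ_{y∈N_{H₁∪H₂}(v)}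 d̃_y − (d̃_u + d̃_v − 2)M̃₂/M̃ + d̃_u d̃_v, and 𝒲 is the set of ordered pairs (x,y) with xy ∈ H₁ ∪ H₂, xu ∉ H₁ ∪ H₂, yv ∉ H₁ ∪ H₂, and {x,y} ∩ {u,v} = ∅. -/

import Mathlib

open Filter

noncomputable section

/-- The degree of the vertex `v` in the simple graph `G` on `[n]`. -/
def deg {n : ℕ} (G : SimpleGraph (Fin n)) (v : Fin n) : ℕ := (G.neighborSet v).ncard

/-- The number of edges of `G`. -/
def nedges {n : ℕ} (G : SimpleGraph (Fin n)) : ℕ := G.edgeSet.ncard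

/-- The maximum degree of `G`. -/
def maxDeg {n : ℕ} (G : SimpleGraph (Fin n)) : ℕ := Finset.univ.sup (deg G)

/-- The probability that a graph chosen uniformly at random among all simple graphs on `[n]`
satisfying `base` also satisfies `Q`. -/
def prob {n : ℕ} (base Q : SimpleGraph (Fin n) → Prop) : ℝ :=
  (Nat.card {G : SimpleGraph (Fin n) // base G ∧ Q G} : ℝ) /
    (Nat.card {G : SimpleGraph (Fin n) // base G} : ℝ)

/-!
Deleting the edges of `H₁` reduces the problem to the probability that `uv` is an edge of a
uniformly random graph `G` with degree sequence `d̃` avoiding `F = H₁ ∪ H₂`. Replace the edges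
`uv` and `xy` by `ux` and `vy`: counting such switchings from both ends expresses the odds of `uv`
as the average number of reverse switchings over the average number of forward ones. Both averages
are sums of probabilities that one or two given pairs are edges. A crude switching bounds these by
`2 d̃ₓ d̃ᵧ / M̃` per edge; feeding this back into the double count gives each single edge
probability as `d̃ₓ d̃ᵧ / M̃` up to a relative error `O(Δ² / M̃)`, and feeding that back once more
gives the relative error `O(Δ⁴ / M̃²)`, which is `O(Δ⁵ n / M³)` because `M ≤ n Δ`.
-/

section Realizations

open Finset

open SimpleGraph (edge)

variable {V : Type*}

open Classical in
/-- The adjacency indicator of `G`, as a real number. -/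
def adjInd (G : SimpleGraph V) (x y : V) : ℝ := if G.Adj x y then 1 else 0

theorem adjInd_of_adj {G : SimpleGraph V} {x y : V} (h : G.Adj x y) : adjInd G x y = 1 := if_pos h

theorem adjInd_of_not_adj {G : SimpleGraph V} {x y : V} (h : ¬ G.Adj x y) : adjInd G x y = 0 :=
  if_neg h

theorem adjInd_comm (G : SimpleGraph V) (x y : V) : adjInd G x y = adjInd G y x := by
  classical
  simp only [adjInd, G.adj_comm]

theorem adjInd_self (G : SimpleGraph V) (x : V) : adjInd G x x = 0 :=
  adjInd_of_not_adj (G.loopless.irrefl x)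

theorem adjInd_nonneg (G : SimpleGraph V) (x y : V) : 0 ≤ adjInd G x y := by
  unfold adjInd; split_ifs <;> norm_num

theorem adjInd_le_one (G : SimpleGraph V) (x y : V) : adjInd G x y ≤ 1 := by
  unfold adjInd; split_ifs <;> norm_num

theorem adjInd_mul_self (G : SimpleGraph V) (x y : V) :
    adjInd G x y * adjInd G x y = adjInd G x y := by
  unfold adjInd; split_ifs <;> norm_num

theorem disjoint_iff_forall_adj {F G : SimpleGraph V} :
    Disjoint G F ↔ ∀ x y, G.Adj x y → ¬ F.Adj x y := by
  rw [← SimpleGraph.disjoint_edgeSet, Set.disjoint_left]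
  exact ⟨fun h x y hxy => h (a := s(x, y)) hxy, fun h e => e.ind fun x y => h x y⟩

theorem adjInd_sup {G H : SimpleGraph V} (h : Disjoint G H) (x y : V) :
    adjInd (G ⊔ H) x y = adjInd G x y + adjInd H x y := by
  have := disjoint_iff_forall_adj.1 h x y
  by_cases h1 : G.Adj x y <;> by_cases h2 : H.Adj x y <;> simp_all [adjInd]

open Classical in
theorem adjInd_compl (G : SimpleGraph V) (x y : V) :
    adjInd Gᶜ x y = 1 - adjInd G x y - if x = y then 1 else 0 := by
  by_cases hxy : x = y
  · simp [hxy, adjInd_self]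
  · by_cases h : G.Adj x y <;> simp [adjInd, hxy, h]

theorem adjInd_compl_sup (F G : SimpleGraph V) (x y : V) :
    adjInd (G ⊔ F)ᶜ x y = adjInd Fᶜ x y * (1 - adjInd G x y) := by
  by_cases hxy : x = y
  · simp [hxy, adjInd_self]
  · by_cases hF : F.Adj x y <;> by_cases hG : G.Adj x y <;> simp [adjInd, hxy, hF, hG]

open Classical in
theorem one_sub_adjInd_compl_sup {F G : SimpleGraph V} (h : Disjoint G F) (w x : V) :
    1 - adjInd (G ⊔ F)ᶜ w x = adjInd G w x + adjInd F w x + if w = x then 1 else 0 := by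
  rw [adjInd_compl, adjInd_sup h]
  ring

theorem adjInd_mul_of_disjoint {F G : SimpleGraph V} (h : Disjoint G F) (x y : V) :
    adjInd G x y * adjInd F x y = 0 := by
  by_cases hG : G.Adj x y
  · rw [adjInd_of_not_adj (disjoint_iff_forall_adj.1 h x y hG), mul_zero]
  · rw [adjInd_of_not_adj hG, zero_mul]

open Classical in
theorem adjInd_edge {u v : V} (huv : u ≠ v) (x y : V) : adjInd (edge u v) x y =
    (if x = u ∧ y = v then 1 else 0) + (if x = v ∧ y = u then 1 else 0) := by
  simp only [adjInd, SimpleGraph.edge_adj]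
  grind

theorem adjInd_sup_edge_of_ne (F : SimpleGraph V) {u v x y : V} (h : s(x, y) ≠ s(u, v)) :
    adjInd (F ⊔ edge u v) x y = adjInd F x y := by
  classical
  have : ¬ ((x = u ∧ y = v) ∨ (x = v ∧ y = u)) := by simpa using h
  simp [adjInd, SimpleGraph.edge_adj, this]

theorem sup_edge_adj {F : SimpleGraph V} {u v : V} (huv : u ≠ v) : (F ⊔ edge u v).Adj u v := by
  simp [SimpleGraph.edge_adj, huv]

theorem compl_sup_edge_adj {F : SimpleGraph V} {u v x y : V} (h : Fᶜ.Adj x y)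
    (hne : s(x, y) ≠ s(u, v)) : (F ⊔ edge u v)ᶜ.Adj x y := by
  have : ¬ ((x = u ∧ y = v) ∨ (x = v ∧ y = u)) := by simpa using hne
  simp_all [SimpleGraph.edge_adj]

open Classical in
theorem one_sub_adjInd_compl_sup_edge {F G : SimpleGraph V} {u v : V} (huv : Fᶜ.Adj u v)
    (hG : Disjoint G (F ⊔ edge u v)) (x : V) : 1 - adjInd (G ⊔ (F ⊔ edge u v))ᶜ u x =
      adjInd (G ⊔ F) u x + (if x = u then 1 else 0) + if x = v then 1 else 0 := by
  rw [SimpleGraph.compl_adj] at huv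
  rw [one_sub_adjInd_compl_sup hG, adjInd_sup (hG.mono_right le_sup_left),
    adjInd_sup ((SimpleGraph.disjoint_edge F).2 huv.2), adjInd_edge huv.1]
  simp only [true_and, huv.1, false_and, if_false, eq_comm (a := u) (b := x)]
  ring

theorem ne_of_adj_of_compl_adj {F : SimpleGraph V} {u v x : V} (huv : F.Adj u v)
    (hux : Fᶜ.Adj u x) : x ≠ v :=
  fun h => ((SimpleGraph.compl_adj ..).1 hux).2 (h ▸ huv)

theorem sym2_ne_of_adj_of_compl_adj {F : SimpleGraph V} {u v x : V} (huv : F.Adj u v)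
    (hux : Fᶜ.Adj u x) (y : V) : s(v, y) ≠ s(u, x) := by
  simp [huv.ne', (ne_of_adj_of_compl_adj huv hux).symm]

variable [Fintype V]

open Classical in
theorem sum_adjInd_edge {u v : V} (huv : u ≠ v) (x : V) : ∑ y, adjInd (edge u v) x y =
    (if x = u then 1 else 0) + (if x = v then 1 else 0) := by
  simp_rw [adjInd_edge huv, sum_add_distrib, ite_and]
  by_cases h1 : x = u <;> by_cases h2 : x = v <;> simp [h1, h2]

open Classical in
/-- The graphs with degree sequence `d` sharing no edge with `F`. -/
def realizations (d : V → ℝ) (F : SimpleGraph V) : Finset (SimpleGraph V) :=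
  {G | (∀ i, ∑ j, adjInd G i j = d i) ∧ Disjoint G F}

/-- The degree sequence left over by `d` once the edges of `H` have been removed. -/
def residualDegree (d : V → ℝ) (H : SimpleGraph V) (i : V) : ℝ := d i - ∑ j, adjInd H i j

open Classical in
theorem residualDegree_edge_apply (d : V → ℝ) {u v : V} (huv : u ≠ v) (i : V) :
    residualDegree d (edge u v) i = d i - (if i = u then 1 else 0) - if i = v then 1 else 0 := by
  rw [residualDegree, sum_adjInd_edge huv, sub_sub]

theorem residualDegree_le (d : V → ℝ) (H : SimpleGraph V) (i : V) : residualDegree d H i ≤ d i :=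
  sub_le_self _ (sum_nonneg fun j _ => adjInd_nonneg H i j)

theorem sum_residualDegree_edge (d : V → ℝ) {u v : V} (huv : u ≠ v) :
    ∑ i, residualDegree d (edge u v) i = ∑ i, d i - 2 := by
  classical
  simp only [residualDegree_edge_apply d huv, sum_sub_distrib, sum_ite_eq', mem_univ, if_true]
  ring

section Mem

variable {d : V → ℝ} {F G : SimpleGraph V}

theorem mem_realizations : G ∈ realizations d F ↔
    (∀ i, ∑ j, adjInd G i j = d i) ∧ Disjoint G F := by
  simp [realizations]

theorem disjoint_of_mem (hG : G ∈ realizations d F) : Disjoint G F := (mem_realizations.1 hG).2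

theorem adjInd_eq_zero_of_mem (hG : G ∈ realizations d F) {x y : V} (h : ¬ Fᶜ.Adj x y) :
    adjInd G x y = 0 := by
  refine adjInd_of_not_adj fun hxy => h ?_
  rw [SimpleGraph.compl_adj]
  exact ⟨hxy.ne, disjoint_iff_forall_adj.1 (disjoint_of_mem hG) x y hxy⟩

theorem sum_adjInd_of_mem (hG : G ∈ realizations d F) (i : V) : ∑ j, adjInd G i j = d i :=
  (mem_realizations.1 hG).1 i

theorem sum_adjInd_left_of_mem (hG : G ∈ realizations d F) (i : V) : ∑ j, adjInd G j i = d i := by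
  simp_rw [adjInd_comm G _ i]
  exact sum_adjInd_of_mem hG i

theorem nonneg_of_mem (hG : G ∈ realizations d F) (i : V) : 0 ≤ d i := by
  rw [← sum_adjInd_of_mem hG i]
  exact sum_nonneg fun j _ => adjInd_nonneg G i j

end Mem

section EdgeDeletion

variable {d : V → ℝ} {F : SimpleGraph V}

theorem sup_mem_realizations_iff {G H : SimpleGraph V} (hFH : Disjoint F H) (hGH : Disjoint G H) :
    G ⊔ H ∈ realizations d F ↔ G ∈ realizations (residualDegree d H) (F ⊔ H) := by
  simp only [mem_realizations, adjInd_sup hGH, sum_add_distrib, residualDegree, eq_sub_iff_add_eq,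
    disjoint_sup_left, disjoint_sup_right, hFH.symm, hGH, and_true]

open Classical in
theorem sum_realizations_filter_ge {H : SimpleGraph V} (hFH : Disjoint F H)
    (g : SimpleGraph V → ℝ) :
    ∑ G ∈ realizations d F with H ≤ G, g G =
      ∑ G ∈ realizations (residualDegree d H) (F ⊔ H), g (G ⊔ H) := by
  have hdisj {G} (hG : G ∈ realizations (residualDegree d H) (F ⊔ H)) : Disjoint G H :=
    (disjoint_of_mem hG).mono_right le_sup_right
  refine (sum_bij' (fun G _ => G ⊔ H) (fun G _ => G \ H) (fun G hG => ?_) (fun G hG => ?_)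
    (fun G hG => (hdisj hG).sup_sdiff_cancel_right)
    (fun G hG => sdiff_sup_cancel (mem_filter.1 hG).2) fun G _ => rfl).symm
  · exact mem_filter.2 ⟨(sup_mem_realizations_iff hFH (hdisj hG)).2 hG, le_sup_right⟩
  · obtain ⟨hmem, hle⟩ := mem_filter.1 hG
    rwa [← sup_mem_realizations_iff hFH disjoint_sdiff_self_left, sdiff_sup_cancel hle]

theorem sum_adjInd_mul {u v : V} (h : Fᶜ.Adj u v) (g : SimpleGraph V → ℝ)
    (hg : ∀ G, g (G ⊔ edge u v) = g G) :
    ∑ G ∈ realizations d F, adjInd G u v * g G =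
      ∑ G ∈ realizations (residualDegree d (edge u v)) (F ⊔ edge u v), g G := by
  classical
  rw [SimpleGraph.compl_adj] at h
  have hle (G : SimpleGraph V) : edge u v ≤ G ↔ G.Adj u v := by
    simp [h.1]
  have := sum_realizations_filter_ge (d := d) ((SimpleGraph.disjoint_edge F).2 h.2) g
  simp only [hg, hle] at this
  simp only [← this, sum_filter, adjInd, ite_mul, one_mul, zero_mul]

theorem sum_one_sub_adjInd_mul (d : V → ℝ) (F : SimpleGraph V) (u v : V)
    (g : SimpleGraph V → ℝ) :
    ∑ G ∈ realizations d F, (1 - adjInd G u v) * g G =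
      ∑ G ∈ realizations d (F ⊔ edge u v), g G := by
  classical
  have : realizations d (F ⊔ edge u v) = {G ∈ realizations d F | ¬ G.Adj u v} := by
    ext G
    rw [mem_filter, mem_realizations, mem_realizations, disjoint_sup_right, and_assoc,
      SimpleGraph.disjoint_edge]
  rw [this, sum_filter]
  refine sum_congr rfl fun G _ => ?_
  by_cases h : G.Adj u v <;> simp [adjInd, h]

theorem sum_adjInd {u v : V} (h : Fᶜ.Adj u v) : ∑ G ∈ realizations d F, adjInd G u v =
    #(realizations (residualDegree d (edge u v)) (F ⊔ edge u v)) := by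
  simpa using sum_adjInd_mul (d := d) h (fun _ => 1) fun _ => rfl

theorem card_realizations_eq_add {u v : V} (h : Fᶜ.Adj u v) :
    (#(realizations d F) : ℝ) = #(realizations d (F ⊔ edge u v)) +
      #(realizations (residualDegree d (edge u v)) (F ⊔ edge u v)) := by
  have := sum_one_sub_adjInd_mul d F u v fun _ => 1
  simp only [mul_one, sum_const, nsmul_eq_mul, sum_sub_distrib, sum_adjInd h] at this
  linarith

theorem card_realizations_sup_edge_le (d : V → ℝ) (F : SimpleGraph V) (u v : V) :
    #(realizations d (F ⊔ edge u v)) ≤ #(realizations d F) :=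
  card_le_card fun G hG => by
    rw [mem_realizations] at hG ⊢
    exact ⟨hG.1, hG.2.mono_right le_sup_left⟩

end EdgeDeletion

/-- The number of ordered edges `xy` of `G` that, when `uv` is an edge of `F`, can be traded
together with `uv` for `ux` and `vy` without using an edge of `F`. -/
def fwdCount (F : SimpleGraph V) (u v : V) (G : SimpleGraph V) : ℝ :=
  ∑ x, ∑ y, adjInd G x y * (adjInd (G ⊔ F)ᶜ u x * adjInd (G ⊔ F)ᶜ v y)

/-- The number of pairs of edges `ux`, `vy` of `G` that, when `uv` is an edge of `F`, can be traded
for `xy` and `uv` without using an edge of `F` other than `uv`. -/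
def revCount (F : SimpleGraph V) (u v : V) (G : SimpleGraph V) : ℝ :=
  ∑ x, ∑ y, adjInd G u x * adjInd G v y * adjInd (G ⊔ F)ᶜ x y

section Switching

variable {d : V → ℝ} {F : SimpleGraph V} {u v : V}

theorem sum_switch_of_compl_adj (huv : F.Adj u v) {x y : V} (hux : Fᶜ.Adj u x) (hvy : Fᶜ.Adj v y)
    (hxy : Fᶜ.Adj x y) :
    ∑ G ∈ realizations (residualDegree d (edge u v)) F,
        adjInd G x y * ((1 - adjInd G u x) * (1 - adjInd G v y)) =
      ∑ G ∈ realizations d F, adjInd G u x * (adjInd G v y * (1 - adjInd G x y)) := by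
  classical
  have hyu : y ≠ u := ne_of_adj_of_compl_adj huv.symm hvy
  have hxv : x ≠ v := ne_of_adj_of_compl_adj huv hux
  have e1 : s(u, x) ≠ s(x, y) := by simp [hyu.symm, hux.ne]
  have e2 : s(v, y) ≠ s(x, y) := by simp [hxv.symm, hvy.ne]
  have e3 : s(v, y) ≠ s(u, x) := sym2_ne_of_adj_of_compl_adj huv hux y
  rw [sum_adjInd_mul hxy (fun G => (1 - adjInd G u x) * (1 - adjInd G v y)) fun G => by
      rw [adjInd_sup_edge_of_ne G e1, adjInd_sup_edge_of_ne G e2],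
    sum_one_sub_adjInd_mul _ _ u x fun G => 1 - adjInd G v y,
    sum_adjInd_mul hux (fun G => adjInd G v y * (1 - adjInd G x y)) fun G => by
      rw [adjInd_sup_edge_of_ne G e1.symm, adjInd_sup_edge_of_ne G e3],
    sum_adjInd_mul (compl_sup_edge_adj hvy e3) (fun G => 1 - adjInd G x y) fun G => by
      rw [adjInd_sup_edge_of_ne G e2.symm]]
  have h (d : V → ℝ) F a b := sum_one_sub_adjInd_mul d F a b fun _ => 1
  simp only [mul_one] at h
  rw [h, h]
  congr 2
  · funext i
    simp only [residualDegree_edge_apply _ huv.ne, residualDegree_edge_apply _ hux.ne,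
      residualDegree_edge_apply _ hvy.ne, residualDegree_edge_apply _ hxy.ne]
    ring
  · ac_rfl

theorem sum_switch (huv : F.Adj u v) (x y : V) :
    ∑ G ∈ realizations (residualDegree d (edge u v)) F,
        adjInd G x y * (adjInd (G ⊔ F)ᶜ u x * adjInd (G ⊔ F)ᶜ v y) =
      ∑ G ∈ realizations d F, adjInd G u x * adjInd G v y * adjInd (G ⊔ F)ᶜ x y := by
  simp only [adjInd_compl_sup]
  by_cases h : Fᶜ.Adj u x ∧ Fᶜ.Adj v y ∧ Fᶜ.Adj x y
  · obtain ⟨hux, hvy, hxy⟩ := h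
    simpa only [adjInd_of_adj, hux, hvy, hxy, one_mul, mul_assoc] using
      sum_switch_of_compl_adj huv hux hvy hxy
  · have hbad : ¬ Fᶜ.Adj u x ∨ ¬ Fᶜ.Adj v y ∨ ¬ Fᶜ.Adj x y := by tauto
    trans 0
    · refine sum_eq_zero fun G hG => ?_
      rcases hbad with h | h | h <;>
        simp only [adjInd_of_not_adj h, adjInd_eq_zero_of_mem hG h, zero_mul, mul_zero]
    · refine (sum_eq_zero fun G hG => ?_).symm
      rcases hbad with h | h | h <;>
        simp only [adjInd_of_not_adj h, adjInd_eq_zero_of_mem hG h, zero_mul, mul_zero]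

theorem sum_fwdCount (huv : F.Adj u v) :
    ∑ G ∈ realizations (residualDegree d (edge u v)) F, fwdCount F u v G =
      ∑ G ∈ realizations d F, revCount F u v G := by
  simp only [fwdCount, revCount]
  rw [sum_comm, sum_comm (s := realizations d F)]
  refine sum_congr rfl fun x _ => ?_
  rw [sum_comm, sum_comm (s := realizations d F)]
  exact sum_congr rfl fun y _ => sum_switch huv x y

theorem sum_adjInd_path_eq (huv : F.Adj u v) {x y : V} (hux : Fᶜ.Adj u x) (hvy : Fᶜ.Adj v y)
    (hxy : Fᶜ.Adj x y) :
    ∑ G ∈ realizations d F, adjInd G u x * (adjInd G v y * adjInd G x y) =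
      ∑ G ∈ realizations (residualDegree d (edge x y)) (F ⊔ edge x y),
        adjInd G u x * adjInd G v y := by
  have e1 : s(u, x) ≠ s(x, y) := by simp [(ne_of_adj_of_compl_adj huv.symm hvy).symm, hux.ne]
  have e2 : s(v, y) ≠ s(x, y) := by simp [(ne_of_adj_of_compl_adj huv hux).symm, hvy.ne]
  rw [← sum_adjInd_mul hxy (fun G => adjInd G u x * adjInd G v y) fun G => by
    rw [adjInd_sup_edge_of_ne G e1, adjInd_sup_edge_of_ne G e2]]
  exact sum_congr rfl fun G _ => by ring

theorem sum_adjInd_path_eq_zero {x y : V} (h : ¬ (Fᶜ.Adj u x ∧ Fᶜ.Adj v y ∧ Fᶜ.Adj x y)) :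
    ∑ G ∈ realizations d F, adjInd G u x * (adjInd G v y * adjInd G x y) = 0 :=
  sum_eq_zero fun G hG => by
    simp only [not_and_or] at h
    rcases h with h | h | h <;> simp only [adjInd_eq_zero_of_mem hG h, zero_mul, mul_zero]

end Switching

section Counts

variable {d : V → ℝ} {F G : SimpleGraph V}

theorem sum_sum_adjInd_mul_left (hG : G ∈ realizations d F) (f : V → ℝ) :
    ∑ x, ∑ y, adjInd G x y * f x = ∑ x, f x * d x :=
  sum_congr rfl fun x _ => by rw [← sum_mul, sum_adjInd_of_mem hG, mul_comm]

theorem sum_sum_adjInd_mul_right (hG : G ∈ realizations d F) (f : V → ℝ) :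
    ∑ x, ∑ y, adjInd G x y * f y = ∑ y, f y * d y := by
  rw [sum_comm]
  exact sum_congr rfl fun y _ => by rw [← sum_mul, sum_adjInd_left_of_mem hG, mul_comm]

theorem fwdCount_eq {F' : SimpleGraph V} (hG : G ∈ realizations d F') (u v : V) :
    fwdCount F u v G = ∑ i, d i - ∑ x, (1 - adjInd (G ⊔ F)ᶜ u x) * d x -
      ∑ y, (1 - adjInd (G ⊔ F)ᶜ v y) * d y +
      ∑ x, ∑ y, adjInd G x y * ((1 - adjInd (G ⊔ F)ᶜ u x) * (1 - adjInd (G ⊔ F)ᶜ v y)) := by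
  have hsplit (x y : V) : adjInd G x y * (adjInd (G ⊔ F)ᶜ u x * adjInd (G ⊔ F)ᶜ v y) =
      adjInd G x y - adjInd G x y * (1 - adjInd (G ⊔ F)ᶜ u x) -
        adjInd G x y * (1 - adjInd (G ⊔ F)ᶜ v y) +
        adjInd G x y * ((1 - adjInd (G ⊔ F)ᶜ u x) * (1 - adjInd (G ⊔ F)ᶜ v y)) := by ring
  simp only [fwdCount, hsplit, sum_add_distrib, sum_sub_distrib]
  rw [sum_sum_adjInd_mul_left hG, sum_sum_adjInd_mul_right hG]
  simp only [sum_adjInd_of_mem hG]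

theorem fwdCount_le {F' : SimpleGraph V} (hG : G ∈ realizations d F') (u v : V) :
    fwdCount F u v G ≤ ∑ i, d i := by
  simp only [← sum_adjInd_of_mem hG]
  exact sum_le_sum fun x _ => sum_le_sum fun y _ => mul_le_of_le_one_right (adjInd_nonneg G x y)
    (mul_le_one₀ (adjInd_le_one _ _ _) (adjInd_nonneg _ _ _) (adjInd_le_one _ _ _))

theorem revCount_eq (hG : G ∈ realizations d F) (u v : V) :
    revCount F u v G = d u * d v - (∑ x, adjInd G u x * adjInd G v x +
      ∑ x, ∑ y, adjInd F x y * (adjInd G u x * adjInd G v y) +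
      ∑ x, ∑ y, adjInd G u x * (adjInd G v y * adjInd G x y)) := by
  classical
  have hdiag : ∑ x, adjInd G u x * adjInd G v x =
      ∑ x, ∑ y, if x = y then adjInd G u x * adjInd G v y else 0 := by simp
  rw [hdiag, ← sum_adjInd_of_mem hG u, ← sum_adjInd_of_mem hG v, sum_mul_sum]
  simp only [revCount, ← sum_sub_distrib, ← sum_add_distrib]
  refine sum_congr rfl fun x _ => sum_congr rfl fun y _ => ?_
  rw [adjInd_compl, adjInd_sup (disjoint_of_mem hG)]
  split_ifs <;> ring

theorem revCount_le {F' : SimpleGraph V} (hG : G ∈ realizations d F') (u v : V) :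
    revCount F u v G ≤ d u * d v := by
  rw [← sum_adjInd_of_mem hG u, ← sum_adjInd_of_mem hG v, sum_mul_sum]
  exact sum_le_sum fun x _ => sum_le_sum fun y _ => mul_le_of_le_one_right
    (mul_nonneg (adjInd_nonneg _ _ _) (adjInd_nonneg _ _ _)) (adjInd_le_one _ _ _)

end Counts

section Sums

variable {f : V → ℝ} {F : SimpleGraph V} {D m B : ℝ}

theorem sum_mul_le_mul_of_le {c f : V → ℝ} (hc : ∀ x, 0 ≤ c x) (hf : ∀ x, f x ≤ B) (hB : 0 ≤ B)
    {E : ℝ} (hE : ∑ x, c x ≤ E) : ∑ x, c x * f x ≤ E * B :=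
  calc ∑ x, c x * f x ≤ ∑ x, c x * B := by
        gcongr with x
        · exact hc x
        · exact hf x
    _ = (∑ x, c x) * B := by rw [sum_mul]
    _ ≤ E * B := by gcongr

theorem sum_sum_adjInd_mul_le {g : V → V → ℝ} {b : V → ℝ} {E : ℝ}
    (hF : ∀ i, ∑ j, adjInd F i j ≤ E) (hE : 0 ≤ E) (hg : ∀ i j, g i j ≤ b i) (hb : ∀ i, 0 ≤ b i)
    (hs : ∑ i, b i ≤ m) : ∑ x, ∑ y, adjInd F x y * g x y ≤ E * m := by
  calc ∑ x, ∑ y, adjInd F x y * g x y ≤ ∑ x, ∑ y, adjInd F x y * b x := by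
        gcongr with x _ y
        · exact adjInd_nonneg F x y
        · exact hg x y
    _ = ∑ x, (∑ y, adjInd F x y) * b x := by simp_rw [sum_mul]
    _ ≤ ∑ x, E * b x := by
        gcongr with x
        · exact hb x
        · exact hF x
    _ = E * ∑ x, b x := by rw [mul_sum]
    _ ≤ E * m := by gcongr

end Sums

/-- `d` and `F` are bounded by `D` up to the slack `k`, and `m` is, up to the slack `2 * k`, the
sum of `d`, which is large compared with `D ^ 2`. Each edge moved from the graphs into `F` costs one
unit of slack. -/
structure IsSparse (d : V → ℝ) (F : SimpleGraph V) (D m k : ℝ) : Prop where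
  one_le : 1 ≤ D
  sq_le : 10000 * D ^ 2 ≤ m
  le : ∀ i, d i ≤ D
  sum_adjInd_le : ∀ i, ∑ j, adjInd F i j ≤ D + k
  abs_sum_sub_le : |∑ i, d i - m| ≤ 2 * k

namespace IsSparse

variable {d : V → ℝ} {F : SimpleGraph V} {D m k : ℝ}

theorem pos (h : IsSparse d F D m k) : 0 < D := zero_lt_one.trans_le h.one_le

theorem total_pos (h : IsSparse d F D m k) : 0 < m := by
  have := pow_pos h.pos 2
  linarith [h.sq_le]

theorem sq_div_le (h : IsSparse d F D m k) : D ^ 2 / m ≤ 1 / 10000 := by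
  rw [div_le_iff₀ h.total_pos]
  linarith [h.sq_le]

theorem sum_adjInd_sup_edge_le (h : IsSparse d F D m k) {u v : V} (huv : Fᶜ.Adj u v) (i : V) :
    ∑ j, adjInd (F ⊔ edge u v) i j ≤ D + (k + 1) := by
  classical
  rw [SimpleGraph.compl_adj] at huv
  simp only [adjInd_sup ((SimpleGraph.disjoint_edge F).2 huv.2), sum_add_distrib,
    sum_adjInd_edge huv.1]
  have := h.sum_adjInd_le i
  split_ifs with h1 h2
  · exact absurd (h1.symm.trans h2) huv.1
  all_goals linarith

theorem sup_edge (h : IsSparse d F D m k) {u v : V} (huv : Fᶜ.Adj u v) :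
    IsSparse d (F ⊔ edge u v) D m (k + 1) :=
  ⟨h.one_le, h.sq_le, h.le, h.sum_adjInd_sup_edge_le huv, h.abs_sum_sub_le.trans (by linarith)⟩

theorem residualDegree_sup_edge (h : IsSparse d F D m k) {u v : V} (huv : Fᶜ.Adj u v) :
    IsSparse (residualDegree d (edge u v)) (F ⊔ edge u v) D m (k + 1) := by
  refine ⟨h.one_le, h.sq_le, fun i => (residualDegree_le d _ i).trans (h.le i),
    h.sum_adjInd_sup_edge_le huv, ?_⟩
  have := abs_le.1 h.abs_sum_sub_le
  rw [sum_residualDegree_edge d huv.ne, abs_le]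
  constructor <;> linarith

theorem abs_fwdCount_sub_le (h : IsSparse d F D m k) (hk : k ≤ 9) {G : SimpleGraph V}
    (hG : G ∈ realizations d F) (u v : V) : |fwdCount F u v G - m| ≤ 50 * D ^ 2 := by
  classical
  have hD := h.one_le
  have hp0 (w x) : 0 ≤ 1 - adjInd (G ⊔ F)ᶜ w x := sub_nonneg.2 (adjInd_le_one _ _ _)
  have hpsum (w) : ∑ x, (1 - adjInd (G ⊔ F)ᶜ w x) ≤ 12 * D := by
    simp only [one_sub_adjInd_compl_sup (disjoint_of_mem hG), sum_add_distrib, sum_ite_eq,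
      mem_univ, if_true, sum_adjInd_of_mem hG]
    linarith [h.le w, h.sum_adjInd_le w]
  have hpd (w) : ∑ x, (1 - adjInd (G ⊔ F)ᶜ w x) * d x ≤ 12 * D * D :=
    sum_mul_le_mul_of_le (hp0 w) h.le h.pos.le (hpsum w)
  have hpp : 0 ≤ ∑ x, ∑ y, adjInd G x y *
      ((1 - adjInd (G ⊔ F)ᶜ u x) * (1 - adjInd (G ⊔ F)ᶜ v y)) :=
    sum_nonneg fun x _ => sum_nonneg fun y _ =>
      mul_nonneg (adjInd_nonneg G x y) (mul_nonneg (hp0 u x) (hp0 v y))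
  have hsum := abs_le.1 h.abs_sum_sub_le
  have hle : fwdCount F u v G ≤ ∑ i, d i := fwdCount_le hG u v
  rw [abs_le]
  constructor
  · rw [fwdCount_eq hG]
    nlinarith [hpd u, hpd v]
  · nlinarith

section UpperBounds

variable {e : V → ℝ}

theorem sum_adjInd_le_mul_card (h : IsSparse d F D m k) (hk : k ≤ 8) (he : ∀ i, 0 ≤ e i)
    (hde : ∀ i, d i ≤ e i) (u v : V) :
    ∑ G ∈ realizations d F, adjInd G u v ≤ 2 * (e u * e v) / m * #(realizations d F) := by
  have hm := h.total_pos
  have hee := mul_nonneg (he u) (he v)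
  by_cases huv : Fᶜ.Adj u v
  swap
  · rw [sum_eq_zero fun G hG => adjInd_eq_zero_of_mem hG huv]
    positivity
  have hfwd : #(realizations (residualDegree d (edge u v)) (F ⊔ edge u v)) * (m / 2) ≤
      ∑ G ∈ realizations (residualDegree d (edge u v)) (F ⊔ edge u v),
        fwdCount (F ⊔ edge u v) u v G := by
    rw [← nsmul_eq_mul]
    refine card_nsmul_le_sum _ _ _ fun G hG => ?_
    have := (h.residualDegree_sup_edge huv).abs_fwdCount_sub_le (by linarith) hG u v
    linarith [(abs_le.1 this).1, h.sq_le]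
  have hrev : ∑ G ∈ realizations d (F ⊔ edge u v), revCount (F ⊔ edge u v) u v G ≤
      #(realizations d (F ⊔ edge u v)) * (e u * e v) := by
    rw [← nsmul_eq_mul]
    refine sum_le_card_nsmul _ _ _ fun G hG => (revCount_le hG u v).trans ?_
    have := nonneg_of_mem hG v
    gcongr
    exacts [he u, hde u, hde v]
  have hcard : (#(realizations d (F ⊔ edge u v)) : ℝ) * (e u * e v) ≤
      #(realizations d F) * (e u * e v) := by
    have := card_realizations_sup_edge_le d F u v
    gcongr
  rw [sum_fwdCount (sup_edge_adj huv.ne)] at hfwd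
  rw [sum_adjInd huv, div_mul_eq_mul_div, le_div_iff₀ hm]
  linarith

theorem sum_adjInd_mul_le (h : IsSparse d F D m k) (hk : k ≤ 7) (he : ∀ i, 0 ≤ e i)
    (hde : ∀ i, d i ≤ e i) {p q r s : V} (hne : Fᶜ.Adj p q → s(r, s) ≠ s(p, q)) :
    ∑ G ∈ realizations d F, adjInd G p q * adjInd G r s ≤
      4 * ((e p * e q) * (e r * e s)) / m ^ 2 * #(realizations d F) := by
  have hm := h.total_pos
  have hrs := mul_nonneg (he r) (he s)
  by_cases hpq : Fᶜ.Adj p q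
  swap
  · rw [sum_eq_zero fun G hG => by rw [adjInd_eq_zero_of_mem hG hpq, zero_mul]]
    have := mul_nonneg (he p) (he q)
    positivity
  have hone := h.sum_adjInd_le_mul_card (by linarith) he hde p q
  rw [sum_adjInd hpq] at hone
  rw [sum_adjInd_mul hpq _ fun G => adjInd_sup_edge_of_ne G (hne hpq)]
  calc _ ≤ 2 * (e r * e s) / m * #(realizations (residualDegree d (edge p q)) (F ⊔ edge p q)) :=
        (h.residualDegree_sup_edge hpq).sum_adjInd_le_mul_card (by linarith) he
          (fun i => (residualDegree_le d _ i).trans (hde i)) r s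
    _ ≤ 2 * (e r * e s) / m * (2 * (e p * e q) / m * #(realizations d F)) := by gcongr
    _ = _ := by field_simp; ring

theorem sum_adjInd_path_le (h : IsSparse d F D m k) (hk : k ≤ 6) (he : ∀ i, 0 ≤ e i)
    (hde : ∀ i, d i ≤ e i) {u v : V} (huv : F.Adj u v) (x y : V) :
    ∑ G ∈ realizations d F, adjInd G u x * (adjInd G v y * adjInd G x y) ≤
      8 * ((e u * e x) * ((e v * e y) * (e x * e y))) / m ^ 3 * #(realizations d F) := by
  have hm := h.total_pos
  have hpair : 0 ≤ (e u * e x) * (e v * e y) :=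
    mul_nonneg (mul_nonneg (he u) (he x)) (mul_nonneg (he v) (he y))
  by_cases hadj : Fᶜ.Adj u x ∧ Fᶜ.Adj v y ∧ Fᶜ.Adj x y
  swap
  · rw [sum_adjInd_path_eq_zero hadj]
    have := mul_nonneg (mul_nonneg (he u) (he x)) (mul_nonneg (mul_nonneg (he v) (he y))
      (mul_nonneg (he x) (he y)))
    positivity
  obtain ⟨hux, hvy, hxy⟩ := hadj
  have hone := h.sum_adjInd_le_mul_card (by linarith) he hde x y
  rw [sum_adjInd hxy] at hone
  rw [sum_adjInd_path_eq huv hux hvy hxy]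
  calc _ ≤ 4 * ((e u * e x) * (e v * e y)) / m ^ 2 *
        #(realizations (residualDegree d (edge x y)) (F ⊔ edge x y)) :=
        (h.residualDegree_sup_edge hxy).sum_adjInd_mul_le (by linarith) he
          (fun i => (residualDegree_le d _ i).trans (hde i))
          fun h => sym2_ne_of_adj_of_compl_adj (Or.inl huv) h y
    _ ≤ 4 * ((e u * e x) * (e v * e y)) / m ^ 2 *
        (2 * (e x * e y) / m * #(realizations d F)) := by gcongr
    _ = _ := by field_simp; ring

end UpperBounds

end IsSparse

/-- `X` agrees with `Y` up to the relative error `ε`. -/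
def Approx (ε X Y : ℝ) : Prop := |X - Y| ≤ ε * Y

namespace Approx

variable {ε ε' X Y Z q : ℝ}

theorem zero : Approx ε 0 0 := by simp [Approx]

theorem nonneg (h : Approx ε X Y) (hε : 0 ≤ ε) (hX : 0 ≤ X) : 0 ≤ Y := by
  unfold Approx at h
  nlinarith [(abs_le.1 h).2]

theorem mono (h : Approx ε X Y) (hε : 0 ≤ ε) (hX : 0 ≤ X) (hle : ε ≤ ε') : Approx ε' X Y :=
  h.trans (mul_le_mul_of_nonneg_right hle (h.nonneg hε hX))

theorem sum {ι : Type*} {s : Finset ι} {f g : ι → ℝ} (h : ∀ i ∈ s, Approx ε (f i) (g i)) :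
    Approx ε (∑ i ∈ s, f i) (∑ i ∈ s, g i) := by
  unfold Approx
  rw [← sum_sub_distrib, mul_sum]
  exact (abs_sum_le_sum_abs _ _).trans (sum_le_sum h)

theorem const_mul (h : Approx ε X Y) (hq : 0 ≤ q) : Approx ε (q * X) (q * Y) := by
  unfold Approx at h ⊢
  rw [← mul_sub, abs_mul, abs_of_nonneg hq, mul_left_comm]
  gcongr

theorem abs_sub_le {η : ℝ} (h : Approx ε X Y) (hε : 0 ≤ ε) (hYZ : Y ≤ Z) (hη : Z - Y ≤ η) :
    |X - Z| ≤ ε * Z + η := by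
  have hYZ' : |Y - Z| ≤ η := by rwa [abs_sub_comm, abs_of_nonneg (sub_nonneg.2 hYZ)]
  calc |X - Z| ≤ |X - Y| + |Y - Z| := _root_.abs_sub_le X Y Z
    _ ≤ ε * Y + η := add_le_add h hYZ'
    _ ≤ ε * Z + η := by gcongr

theorem trans (h : Approx ε X Y) (h' : Approx ε' Z (q * X)) (hX : 0 ≤ X) (hZ : 0 ≤ Z)
    (hε : 0 ≤ ε) (hε1 : ε < 1) (hε' : 0 ≤ ε') : Approx (ε + ε' + ε * ε') Z (q * Y) := by
  have hY := h.nonneg hε hX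
  have hqX := h'.nonneg hε' hZ
  unfold Approx at h h' ⊢
  obtain ⟨h1, h2⟩ := abs_le.1 h
  obtain ⟨h3, h4⟩ := abs_le.1 h'
  rcases le_or_gt 0 q with hq | hq
  · have h5 := mul_le_mul_of_nonneg_left h1 hq
    have h6 := mul_le_mul_of_nonneg_left h2 hq
    have h7 := mul_le_mul_of_nonneg_left h6 hε'
    rw [abs_le]
    constructor <;> nlinarith
  · have hX0 : X = 0 := by nlinarith
    subst hX0
    have hY0 : Y = 0 := by nlinarith
    subst hY0
    simpa using h'

end Approx

namespace IsSparse

variable {d : V → ℝ} {F : SimpleGraph V} {D m k : ℝ}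

theorem sum_le_two_mul (h : IsSparse d F D m k) (hk : k ≤ 8) : ∑ i, d i ≤ 2 * m := by
  have := h.one_le
  nlinarith [(abs_le.1 h.abs_sum_sub_le).2, h.sq_le]

theorem sum_mul_self_le (h : IsSparse d F D m k) (hk : k ≤ 8) (hd : ∀ i, 0 ≤ d i) :
    ∑ i, d i * d i ≤ 2 * m * D :=
  sum_mul_le_mul_of_le hd h.le h.pos.le (h.sum_le_two_mul hk)

section ReverseDefect

variable {u v : V}

theorem sum_codegree_le (h : IsSparse d F D m k) (hk : k ≤ 7) (hd : ∀ i, 0 ≤ d i)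
    (huv : F.Adj u v) :
    ∑ G ∈ realizations d F, ∑ x, adjInd G u x * adjInd G v x ≤
      8 * (D / m) * (d u * d v) * #(realizations d F) := by
  have hm := h.total_pos
  have := hd u
  have := hd v
  rw [sum_comm]
  calc _ ≤ ∑ x, 4 * (d u * d v) / m ^ 2 * #(realizations d F) * (d x * d x) :=
        sum_le_sum fun x _ => (h.sum_adjInd_mul_le hk hd (fun _ => le_rfl)
          fun hux => sym2_ne_of_adj_of_compl_adj huv hux x).trans_eq (by ring)
    _ = 4 * (d u * d v) / m ^ 2 * #(realizations d F) * ∑ x, d x * d x := by rw [mul_sum]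
    _ ≤ 4 * (d u * d v) / m ^ 2 * #(realizations d F) * (2 * m * D) := by
        gcongr
        exact h.sum_mul_self_le (by linarith) hd
    _ = _ := by field_simp; ring

theorem sum_sum_adjInd_mul_pair_le (h : IsSparse d F D m k) (hk : k ≤ 7) (hd : ∀ i, 0 ≤ d i)
    (huv : F.Adj u v) :
    ∑ G ∈ realizations d F, ∑ x, ∑ y, adjInd F x y * (adjInd G u x * adjInd G v y) ≤
      72 * (D ^ 2 / m) * (d u * d v) * #(realizations d F) := by
  have hm := h.total_pos
  have := hd u
  have := hd v
  have hdeg (i) : ∑ j, adjInd F i j ≤ 9 * D := by linarith [h.sum_adjInd_le i, h.one_le]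
  have hc : 0 ≤ 4 * (d u * d v) / m ^ 2 * #(realizations d F) * D := by
    have := h.pos
    positivity
  rw [sum_comm]
  simp_rw [sum_comm (s := realizations d F), ← mul_sum]
  calc _ ≤ 9 * D * (4 * (d u * d v) / m ^ 2 * #(realizations d F) * D * (2 * m)) := by
        refine sum_sum_adjInd_mul_le
          (b := fun x => 4 * (d u * d v) / m ^ 2 * #(realizations d F) * D * d x) hdeg
          (by linarith [h.pos]) (fun x y => ?_) (fun x => mul_nonneg hc (hd x)) ?_
        · have := hd x
          calc _ ≤ 4 * ((d u * d x) * (d v * d y)) / m ^ 2 * #(realizations d F) :=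
                h.sum_adjInd_mul_le hk hd (fun _ => le_rfl)
                  fun hux => sym2_ne_of_adj_of_compl_adj huv hux y
            _ ≤ 4 * ((d u * d x) * (d v * D)) / m ^ 2 * #(realizations d F) := by
                gcongr
                exact h.le y
            _ = _ := by ring
        · rw [← mul_sum]
          exact mul_le_mul_of_nonneg_left (h.sum_le_two_mul (by linarith)) hc
    _ = _ := by field_simp; ring

theorem sum_sum_path_le (h : IsSparse d F D m k) (hk : k ≤ 6) (hd : ∀ i, 0 ≤ d i)
    (huv : F.Adj u v) :
    ∑ G ∈ realizations d F, ∑ x, ∑ y, adjInd G u x * (adjInd G v y * adjInd G x y) ≤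
      32 * (D ^ 2 / m) * (d u * d v) * #(realizations d F) := by
  have hm := h.total_pos
  have := hd u
  have := hd v
  have hsq := h.sum_mul_self_le (by linarith) hd
  have hsq0 : 0 ≤ ∑ x, d x * d x := sum_nonneg fun x _ => mul_self_nonneg _
  have hmD : 0 ≤ 2 * m * D := hsq0.trans hsq
  rw [sum_comm]
  simp_rw [sum_comm (s := realizations d F)]
  calc _ ≤ ∑ x, ∑ y,
        8 * (d u * d v) / m ^ 3 * #(realizations d F) * ((d x * d x) * (d y * d y)) :=
        sum_le_sum fun x _ => sum_le_sum fun y _ =>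
          (h.sum_adjInd_path_le hk hd (fun _ => le_rfl) huv x y).trans_eq (by ring)
    _ = 8 * (d u * d v) / m ^ 3 * #(realizations d F) * ((∑ x, d x * d x) * ∑ y, d y * d y) := by
        simp_rw [← mul_sum, ← sum_mul]
    _ ≤ 8 * (d u * d v) / m ^ 3 * #(realizations d F) * ((2 * m * D) * (2 * m * D)) := by gcongr
    _ = _ := by field_simp; ring

theorem sum_sub_revCount_le (h : IsSparse d F D m k) (hk : k ≤ 6) (hd : ∀ i, 0 ≤ d i)
    (huv : F.Adj u v) :
    ∑ G ∈ realizations d F, (d u * d v - revCount F u v G) ≤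
      112 * (D ^ 2 / m) * (d u * d v) * #(realizations d F) := by
  have hm := h.total_pos
  have := mul_nonneg (hd u) (hd v)
  have hD : 8 * (D / m) * (d u * d v) * #(realizations d F) ≤
      8 * (D ^ 2 / m) * (d u * d v) * #(realizations d F) := by
    gcongr
    exact le_self_pow₀ h.one_le two_ne_zero
  rw [sum_congr rfl fun G hG => by rw [revCount_eq hG, sub_sub_cancel]]
  simp only [sum_add_distrib]
  linarith [h.sum_codegree_le (by linarith) hd huv,
    h.sum_sum_adjInd_mul_pair_le (by linarith) hd huv, h.sum_sum_path_le hk hd huv]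

end ReverseDefect

section Asymptotics

variable {u v : V}

theorem abs_sum_fwdCount_sub_le (h : IsSparse d F D m k) (hk : k ≤ 9) (u v : V) :
    |∑ G ∈ realizations d F, fwdCount F u v G - #(realizations d F) * m| ≤
      #(realizations d F) * (50 * D ^ 2) := by
  have hsum : ∑ G ∈ realizations d F, fwdCount F u v G - #(realizations d F) * m =
      ∑ G ∈ realizations d F, (fwdCount F u v G - m) := by
    rw [sum_sub_distrib, sum_const, nsmul_eq_mul]
  rw [hsum]
  exact (abs_sum_le_sum_abs _ _).trans ((sum_le_card_nsmul _ _ _ fun G hG =>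
    h.abs_fwdCount_sub_le hk hG u v).trans_eq (nsmul_eq_mul _ _))

theorem abs_card_residualDegree_mul_sub_le (h : IsSparse d F D m k) (hk : k ≤ 5)
    (hd : ∀ i, 0 ≤ d i) (huv : Fᶜ.Adj u v) :
    |#(realizations (residualDegree d (edge u v)) (F ⊔ edge u v)) * m -
        d u * d v * #(realizations d F)| ≤
      220 * (D ^ 2 / m) * (d u * d v * #(realizations d F)) := by
  have hm := h.total_pos
  have hcard := card_realizations_eq_add (d := d) huv
  have hup := h.sum_adjInd_le_mul_card (by linarith) hd (fun _ => le_rfl) u v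
  have hdefect := (h.sup_edge huv).sum_sub_revCount_le (by linarith) hd (sup_edge_adj huv.ne)
  have hrev_le : ∑ G ∈ realizations d (F ⊔ edge u v), revCount (F ⊔ edge u v) u v G ≤
      #(realizations d (F ⊔ edge u v)) * (d u * d v) := by
    rw [← nsmul_eq_mul]
    exact sum_le_card_nsmul _ _ _ fun G hG => revCount_le hG u v
  have hfwd := abs_le.1 <|
    (h.residualDegree_sup_edge huv).abs_sum_fwdCount_sub_le (by linarith) u v
  rw [sum_fwdCount (sup_edge_adj huv.ne)] at hfwd
  rw [sum_adjInd huv] at hup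
  simp only [sum_sub_distrib, sum_const, nsmul_eq_mul] at hdefect
  set N := (#(realizations d F) : ℝ)
  set N₀ := (#(realizations d (F ⊔ edge u v)) : ℝ)
  set N₁ := (#(realizations (residualDegree d (edge u v)) (F ⊔ edge u v)) : ℝ) with hN₁
  have hN₁0 : 0 ≤ N₁ := Nat.cast_nonneg _
  have hN₀ : N₀ ≤ N := by linarith
  have hq0 : 0 ≤ d u * d v := mul_nonneg (hd u) (hd v)
  have hqD : d u * d v ≤ D ^ 2 := by
    rw [sq]
    exact mul_le_mul (h.le u) (h.le v) (hd v) h.pos.le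
  have hDN : N₁ * D ^ 2 ≤ 2 * (D ^ 2 / m) * (d u * d v * N) :=
    calc N₁ * D ^ 2 ≤ 2 * (d u * d v) / m * N * D ^ 2 := by gcongr
      _ = _ := by ring
  have hdefect' : 112 * (D ^ 2 / m) * (d u * d v) * N₀ ≤ 112 * (D ^ 2 / m) * (d u * d v) * N := by
    gcongr
  have hqN : N₁ * (d u * d v) ≤ N₁ * D ^ 2 := by gcongr
  have hqN0 : 0 ≤ N₁ * (d u * d v) := by positivity
  have hsplit : d u * d v * N = N₀ * (d u * d v) + N₁ * (d u * d v) := by rw [hcard]; ring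
  rw [abs_le]
  constructor <;> linarith

theorem approx_sum_adjInd (h : IsSparse d F D m k) (hk : k ≤ 5) (u v : V) :
    Approx (220 * (D ^ 2 / m)) (∑ G ∈ realizations d F, adjInd G u v)
      (adjInd Fᶜ u v * (d u * d v / m) * #(realizations d F)) := by
  rcases (realizations d F).eq_empty_or_nonempty with hempty | ⟨G₀, hG₀⟩
  · simp [hempty, Approx.zero]
  by_cases huv : Fᶜ.Adj u v
  swap
  · rw [sum_eq_zero fun G hG => adjInd_eq_zero_of_mem hG huv, adjInd_of_not_adj huv, zero_mul,
      zero_mul]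
    exact .zero
  have hm := h.total_pos
  rw [sum_adjInd huv, adjInd_of_adj huv, one_mul]
  convert Approx.const_mul (h.abs_card_residualDegree_mul_sub_le hk (nonneg_of_mem hG₀) huv)
    (inv_nonneg.2 hm.le) using 1 <;> field_simp

open Classical in
theorem approx_sum_adjInd_mul (h : IsSparse d F D m k) (hk : k ≤ 4) (huv : F.Adj u v) (x y : V) :
    Approx (660 * (D ^ 2 / m)) (∑ G ∈ realizations d F, adjInd G u x * adjInd G v y)
      (adjInd Fᶜ u x * adjInd Fᶜ v y * (d x * (d y - if x = y then 1 else 0)) *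
        (d u * d v / m ^ 2 * #(realizations d F))) := by
  by_cases hadj : Fᶜ.Adj u x ∧ Fᶜ.Adj v y
  swap
  · have hzero : ∑ G ∈ realizations d F, adjInd G u x * adjInd G v y = 0 :=
      sum_eq_zero fun G hG => by
        rcases not_and_or.1 hadj with hadj | hadj <;> simp [adjInd_eq_zero_of_mem hG hadj]
    rw [hzero]
    rcases not_and_or.1 hadj with hadj | hadj <;> simp [adjInd_of_not_adj hadj, Approx.zero]
  obtain ⟨hux, hvy⟩ := hadj
  have hne := sym2_ne_of_adj_of_compl_adj huv hux y
  have hx0 : 0 ≤ D ^ 2 / m := div_nonneg (sq_nonneg D) h.total_pos.le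
  have hone := h.approx_sum_adjInd (by linarith) u x
  rw [sum_adjInd hux] at hone
  rw [sum_adjInd_mul hux _ fun G => adjInd_sup_edge_of_ne G hne]
  have htwo := (h.residualDegree_sup_edge hux).approx_sum_adjInd (by linarith) v y
  have hZ := sum_nonneg fun G (_ : G ∈ realizations (residualDegree d (edge u x)) (F ⊔ edge u x)) =>
    adjInd_nonneg G v y
  have hboth := (hone.trans htwo (Nat.cast_nonneg _) hZ (by positivity)
    (by linarith [h.sq_div_le]) (by positivity)).mono (ε' := 660 * (D ^ 2 / m)) (by positivity) hZ
    (by nlinarith [h.sq_div_le])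
  have hyu : y ≠ u := ne_of_adj_of_compl_adj huv.symm hvy
  have hxv : x ≠ v := ne_of_adj_of_compl_adj huv hux
  convert hboth using 1
  simp only [adjInd_of_adj hux, adjInd_of_adj hvy, adjInd_of_adj (compl_sup_edge_adj hvy hne),
    residualDegree_edge_apply d hux.ne, huv.ne', hxv.symm, hyu, if_false, eq_comm (a := y)]
  field_simp
  ring

theorem approx_sum_adjInd_path (h : IsSparse d F D m k) (hk : k ≤ 3) (huv : F.Adj u v)
    (x y : V) :
    Approx (1100 * (D ^ 2 / m))
      (∑ G ∈ realizations d F, adjInd G u x * (adjInd G v y * adjInd G x y))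
      (adjInd Fᶜ u x * adjInd Fᶜ v y * adjInd Fᶜ x y * (d x * (d x - 1) * (d y * (d y - 1))) *
        (d u * d v / m ^ 3 * #(realizations d F))) := by
  classical
  by_cases hadj : Fᶜ.Adj u x ∧ Fᶜ.Adj v y ∧ Fᶜ.Adj x y
  swap
  · rw [sum_adjInd_path_eq_zero hadj]
    simp only [not_and_or] at hadj
    rcases hadj with hadj | hadj | hadj <;> simp [adjInd_of_not_adj hadj, Approx.zero]
  obtain ⟨hux, hvy, hxy⟩ := hadj
  have hx0 : 0 ≤ D ^ 2 / m := div_nonneg (sq_nonneg D) h.total_pos.le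
  have hone := h.approx_sum_adjInd (by linarith) x y
  rw [sum_adjInd hxy] at hone
  rw [sum_adjInd_path_eq huv hux hvy hxy]
  have htwo := (h.residualDegree_sup_edge hxy).approx_sum_adjInd_mul (by linarith)
    (Or.inl huv : (F ⊔ edge x y).Adj u v) x y
  rw [← mul_assoc, ← mul_assoc] at htwo
  have hZ := sum_nonneg fun G (_ : G ∈ realizations (residualDegree d (edge x y)) (F ⊔ edge x y)) =>
    mul_nonneg (adjInd_nonneg G u x) (adjInd_nonneg G v y)
  have hboth := (hone.trans htwo (Nat.cast_nonneg _) hZ (by positivity)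
    (by linarith [h.sq_div_le]) (by positivity)).mono (ε' := 1100 * (D ^ 2 / m)) (by positivity) hZ
    (by nlinarith [h.sq_div_le])
  have hyu : y ≠ u := ne_of_adj_of_compl_adj huv.symm hvy
  have hxv : x ≠ v := ne_of_adj_of_compl_adj huv hux
  have e1 : s(u, x) ≠ s(x, y) := by simp [hyu.symm, hux.ne]
  have e2 : s(v, y) ≠ s(x, y) := by simp [hxv.symm, hvy.ne]
  convert hboth using 1
  simp only [adjInd_of_adj hux, adjInd_of_adj hvy, adjInd_of_adj hxy,
    adjInd_of_adj (compl_sup_edge_adj hux e1), adjInd_of_adj (compl_sup_edge_adj hvy e2),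
    residualDegree_edge_apply d hxy.ne, hxy.ne, hxy.ne', hux.ne, hvy.ne, hyu.symm, hxv.symm,
    if_true, if_false]
  field_simp
  ring

end Asymptotics

end IsSparse

section Defects

variable {d : V → ℝ} {F : SimpleGraph V} {D m B : ℝ} {u v : V}

/-- The weight of the edges of `F` that can occur as the missing edge `xy` of a path `u x`, `y v`,
when `uv` is itself an edge of `F`. -/
def closableSum (d : V → ℝ) (F : SimpleGraph V) (u v : V) : ℝ :=
  ∑ x, ∑ y, adjInd F x y * (adjInd Fᶜ u x * adjInd Fᶜ v y * (d x * d y))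

/-- The expected proportion of the pairs in `N(u) × N(v)` that cannot be switched back. -/
def revDefect (d : V → ℝ) (F : SimpleGraph V) (m : ℝ) (u v : V) : ℝ :=
  (∑ x, d x * (d x - 1)) ^ 2 / m ^ 3 + (∑ x, d x * (d x - 1)) / m ^ 2 +
    closableSum d F u v / m ^ 2

namespace IsSparse

theorem sum_mul_sub_one_le (h : IsSparse d F D m 1) (hd : ∀ i, 0 ≤ d i) (hs : ∑ i, d i ≤ m) :
    ∑ i, d i * (d i - 1) ≤ D * m :=
  (sum_mul_le_mul_of_le hd (fun i => (sub_le_self _ zero_le_one).trans (h.le i)) h.pos.le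
    hs).trans_eq (mul_comm m D)

theorem mul_sub_one_le (h : IsSparse d F D m 1) (hd : ∀ i, 0 ≤ d i) (i : V) :
    d i * (d i - 1) ≤ D ^ 2 := by
  nlinarith [hd i, h.le i]

theorem sum_one_sub_adjInd_compl_mul_le (h : IsSparse d F D m 1) {f : V → ℝ} (hf : ∀ x, f x ≤ B)
    (hB : 0 ≤ B) (u : V) : ∑ x, (1 - adjInd Fᶜ u x) * f x ≤ 3 * D * B := by
  classical
  refine sum_mul_le_mul_of_le (fun x => sub_nonneg.2 (adjInd_le_one _ _ _)) hf hB ?_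
  have hterm (x) : 1 - adjInd Fᶜ u x = adjInd F u x + if u = x then 1 else 0 := by
    rw [adjInd_compl]
    ring
  simp only [hterm, sum_add_distrib, sum_ite_eq, mem_univ, if_true]
  linarith [h.sum_adjInd_le u, h.one_le]

theorem abs_sum_codegree_sub_le (h : IsSparse d F D m 1) (hd : ∀ i, 0 ≤ d i)
    (hw : ∀ i, 0 ≤ d i * (d i - 1)) (hs : ∑ i, d i ≤ m) (huv : F.Adj u v) :
    |∑ G ∈ realizations d F, ∑ x, adjInd G u x * adjInd G v x -
        (∑ x, d x * (d x - 1)) / m ^ 2 * (d u * d v * #(realizations d F))| ≤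
      666 * (D ^ 4 / m ^ 2) * (d u * d v * #(realizations d F)) := by
  classical
  have hm := h.total_pos
  have hD := h.one_le
  have hq : 0 ≤ d u * d v / m ^ 2 * #(realizations d F) := by
    have := mul_nonneg (hd u) (hd v)
    positivity
  have happrox := Approx.sum (s := univ) fun x _ =>
    h.approx_sum_adjInd_mul (by norm_num) huv x x
  simp only [if_true, ← sum_mul] at happrox
  rw [sum_comm]
  set q := d u * d v / m ^ 2 * #(realizations d F)
  have hle : ∑ x, adjInd Fᶜ u x * adjInd Fᶜ v x * (d x * (d x - 1)) ≤ ∑ x, d x * (d x - 1) :=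
    sum_le_sum fun x _ => mul_le_of_le_one_left (hw x)
      (mul_le_one₀ (adjInd_le_one _ _ _) (adjInd_nonneg _ _ _) (adjInd_le_one _ _ _))
  have hgap : ∑ x, d x * (d x - 1) - ∑ x, adjInd Fᶜ u x * adjInd Fᶜ v x * (d x * (d x - 1)) ≤
      6 * D ^ 3 :=
    calc _ ≤ ∑ x, (1 - adjInd Fᶜ u x) * (d x * (d x - 1)) +
          ∑ x, (1 - adjInd Fᶜ v x) * (d x * (d x - 1)) := by
          rw [← sum_sub_distrib, ← sum_add_distrib]
          refine sum_le_sum fun x _ => ?_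
          have := mul_nonneg (mul_nonneg (sub_nonneg.2 (adjInd_le_one Fᶜ u x))
            (sub_nonneg.2 (adjInd_le_one Fᶜ v x))) (hw x)
          linarith
      _ ≤ 3 * D * D ^ 2 + 3 * D * D ^ 2 :=
          add_le_add
            (h.sum_one_sub_adjInd_compl_mul_le (h.mul_sub_one_le hd) (sq_nonneg D) u)
            (h.sum_one_sub_adjInd_compl_mul_le (h.mul_sub_one_le hd) (sq_nonneg D) v)
      _ = 6 * D ^ 3 := by ring
  calc _ = |∑ x, ∑ G ∈ realizations d F, adjInd G u x * adjInd G v x -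
        (∑ x, d x * (d x - 1)) * q| := by simp only [q]; ring_nf
    _ ≤ 660 * (D ^ 2 / m) * ((∑ x, d x * (d x - 1)) * q) + 6 * D ^ 3 * q :=
        happrox.abs_sub_le (by positivity) (by gcongr)
          (by rw [← sub_mul]; exact mul_le_mul_of_nonneg_right hgap hq)
    _ ≤ 660 * (D ^ 2 / m) * (D * m * q) + 6 * D ^ 3 * q := by
        gcongr
        exact h.sum_mul_sub_one_le hd hs
    _ = 666 * q * D ^ 3 := by field_simp; ring
    _ ≤ 666 * q * D ^ 4 := by gcongr; norm_num
    _ = _ := by simp only [q]; ring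

theorem sum_sum_one_sub_adjInd_compl_mul_le (h : IsSparse d F D m 1) {w : V → ℝ}
    (hw : ∀ i, 0 ≤ w i) (hwB : ∀ i, w i ≤ B) (u v : V) :
    (∑ i, w i) ^ 2 -
        ∑ x, ∑ y, adjInd Fᶜ u x * adjInd Fᶜ v y * adjInd Fᶜ x y * (w x * w y) ≤
      9 * D * B * ∑ i, w i := by
  have hB : 0 ≤ B := (hw u).trans (hwB u)
  have hterm (x y) : w x * w y - adjInd Fᶜ u x * adjInd Fᶜ v y * adjInd Fᶜ x y * (w x * w y) ≤
      (1 - adjInd Fᶜ u x) * w x * w y + w x * ((1 - adjInd Fᶜ v y) * w y) +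
        w x * ((1 - adjInd Fᶜ x y) * w y) := by
    have ha := sub_nonneg.2 (adjInd_le_one Fᶜ u x)
    have hb := sub_nonneg.2 (adjInd_le_one Fᶜ v y)
    have hc := sub_nonneg.2 (adjInd_le_one Fᶜ x y)
    have hab := mul_nonneg (mul_nonneg ha hb) (mul_nonneg (hw x) (hw y))
    have habc := mul_nonneg (mul_nonneg (sub_nonneg.2 (mul_le_one₀ (adjInd_le_one Fᶜ u x)
      (adjInd_nonneg _ _ _) (adjInd_le_one Fᶜ v y))) hc) (mul_nonneg (hw x) (hw y))
    linarith
  have hgap (a) : ∑ x, (1 - adjInd Fᶜ a x) * w x ≤ 3 * D * B :=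
    h.sum_one_sub_adjInd_compl_mul_le hwB hB a
  calc _ ≤ ∑ x, ∑ y, ((1 - adjInd Fᶜ u x) * w x * w y + w x * ((1 - adjInd Fᶜ v y) * w y) +
        w x * ((1 - adjInd Fᶜ x y) * w y)) := by
        rw [sq, sum_mul_sum, ← sum_sub_distrib]
        simp only [← sum_sub_distrib]
        exact sum_le_sum fun x _ => sum_le_sum fun y _ => hterm x y
    _ = (∑ x, (1 - adjInd Fᶜ u x) * w x) * ∑ y, w y +
        (∑ x, w x) * (∑ y, (1 - adjInd Fᶜ v y) * w y) +
          ∑ x, w x * ∑ y, (1 - adjInd Fᶜ x y) * w y := by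
        simp only [sum_add_distrib, ← mul_sum, ← sum_mul]
    _ ≤ 3 * D * B * (∑ y, w y) + (∑ x, w x) * (3 * D * B) + (∑ x, w x) * (3 * D * B) := by
        have hW : 0 ≤ ∑ x, w x := sum_nonneg fun x _ => hw x
        refine add_le_add (add_le_add (mul_le_mul_of_nonneg_right (hgap u) hW)
          (mul_le_mul_of_nonneg_left (hgap v) hW)) ?_
        exact sum_mul_le_mul_of_le hw hgap
          (mul_nonneg (mul_nonneg zero_le_three h.pos.le) hB) le_rfl
    _ = _ := by ring

theorem abs_sum_path_sub_le (h : IsSparse d F D m 1) (hd : ∀ i, 0 ≤ d i)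
    (hw : ∀ i, 0 ≤ d i * (d i - 1)) (hs : ∑ i, d i ≤ m) (huv : F.Adj u v) :
    |∑ G ∈ realizations d F, ∑ x, ∑ y, adjInd G u x * (adjInd G v y * adjInd G x y) -
        (∑ x, d x * (d x - 1)) ^ 2 / m ^ 3 * (d u * d v * #(realizations d F))| ≤
      1109 * (D ^ 4 / m ^ 2) * (d u * d v * #(realizations d F)) := by
  have hm := h.total_pos
  have hD := h.pos
  have hq : 0 ≤ d u * d v / m ^ 3 * #(realizations d F) := by
    have := mul_nonneg (hd u) (hd v)
    positivity
  have happrox := Approx.sum (s := univ) fun x _ => Approx.sum (s := univ) fun y _ =>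
    h.approx_sum_adjInd_path (by norm_num) huv x y
  simp only [← sum_mul] at happrox
  have hgap := h.sum_sum_one_sub_adjInd_compl_mul_le hw (h.mul_sub_one_le hd) u v
  have hsum := h.sum_mul_sub_one_le hd hs
  have hsum0 : 0 ≤ ∑ x, d x * (d x - 1) := sum_nonneg fun x _ => hw x
  rw [sum_comm]
  simp_rw [sum_comm (s := realizations d F)]
  set q := d u * d v / m ^ 3 * #(realizations d F)
  have hle : ∑ x, ∑ y, adjInd Fᶜ u x * adjInd Fᶜ v y * adjInd Fᶜ x y *
      (d x * (d x - 1) * (d y * (d y - 1))) ≤ (∑ x, d x * (d x - 1)) ^ 2 := by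
    rw [sq, sum_mul_sum]
    exact sum_le_sum fun x _ => sum_le_sum fun y _ =>
      mul_le_of_le_one_left (mul_nonneg (hw x) (hw y)) (mul_le_one₀ (mul_le_one₀
        (adjInd_le_one _ _ _) (adjInd_nonneg _ _ _) (adjInd_le_one _ _ _)) (adjInd_nonneg _ _ _)
        (adjInd_le_one _ _ _))
  calc _ = |∑ x, ∑ y, ∑ G ∈ realizations d F, adjInd G u x * (adjInd G v y * adjInd G x y) -
        (∑ x, d x * (d x - 1)) ^ 2 * q| := by simp only [q]; ring_nf
    _ ≤ 1100 * (D ^ 2 / m) * ((∑ x, d x * (d x - 1)) ^ 2 * q) +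
          9 * D * D ^ 2 * (∑ x, d x * (d x - 1)) * q :=
        happrox.abs_sub_le (by positivity) (by gcongr)
          (by rw [← sub_mul]; exact mul_le_mul_of_nonneg_right hgap hq)
    _ ≤ 1100 * (D ^ 2 / m) * ((D * m) ^ 2 * q) + 9 * D * D ^ 2 * (D * m) * q := by gcongr
    _ = _ := by simp only [q]; field_simp; ring

theorem closableSum_le (h : IsSparse d F D m 1) (hd : ∀ i, 0 ≤ d i) (hs : ∑ i, d i ≤ m) (u v : V) :
    closableSum d F u v ≤ 2 * D * (D * m) := by
  refine sum_sum_adjInd_mul_le (b := fun x => D * d x)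
    (fun i => by linarith [h.sum_adjInd_le i, h.one_le]) (by linarith [h.pos])
    (fun x y => ?_) (fun x => mul_nonneg h.pos.le (hd x)) ?_
  · calc _ ≤ d x * d y := mul_le_of_le_one_left (mul_nonneg (hd x) (hd y))
          (mul_le_one₀ (adjInd_le_one _ _ _) (adjInd_nonneg _ _ _) (adjInd_le_one _ _ _))
      _ ≤ d x * D := mul_le_mul_of_nonneg_left (h.le y) (hd x)
      _ = D * d x := mul_comm _ _
  · rw [← mul_sum]
    exact mul_le_mul_of_nonneg_left hs h.pos.le

theorem abs_sum_closable_sub_le (h : IsSparse d F D m 1) (hd : ∀ i, 0 ≤ d i)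
    (hs : ∑ i, d i ≤ m) (huv : F.Adj u v) :
    |∑ G ∈ realizations d F, ∑ x, ∑ y, adjInd F x y * (adjInd G u x * adjInd G v y) -
        closableSum d F u v / m ^ 2 * (d u * d v * #(realizations d F))| ≤
      1320 * (D ^ 4 / m ^ 2) * (d u * d v * #(realizations d F)) := by
  classical
  have hm := h.total_pos
  have hD := h.pos
  have hq : 0 ≤ d u * d v / m ^ 2 * #(realizations d F) := by
    have := mul_nonneg (hd u) (hd v)
    positivity
  have happrox := Approx.sum (s := univ) fun x _ => Approx.sum (s := univ) fun y _ =>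
    (h.approx_sum_adjInd_mul (by norm_num) huv x y).const_mul (adjInd_nonneg F x y)
  have hdiag (x y) : adjInd F x y * (adjInd Fᶜ u x * adjInd Fᶜ v y *
      (d x * (d y - if x = y then 1 else 0)) * (d u * d v / m ^ 2 * #(realizations d F))) =
      adjInd F x y * (adjInd Fᶜ u x * adjInd Fᶜ v y * (d x * d y)) *
        (d u * d v / m ^ 2 * #(realizations d F)) := by
    by_cases hxy : x = y
    · simp [hxy, adjInd_self]
    · rw [if_neg hxy, sub_zero, mul_assoc (adjInd F x y)]
  simp only [hdiag, ← sum_mul] at happrox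
  have hle := h.closableSum_le hd hs u v
  rw [sum_comm]
  simp_rw [sum_comm (s := realizations d F), ← mul_sum]
  calc _ = _ := by rw [div_mul_eq_mul_div, ← mul_div_assoc', mul_div_right_comm]
    _ ≤ 1320 * (D ^ 4 / m ^ 2) * (d u * d v * #(realizations d F)) := by
        refine le_trans happrox ?_
        change _ * (closableSum d F u v * _) ≤ _
        calc _ ≤ 660 * (D ^ 2 / m) * (2 * D * (D * m) *
              (d u * d v / m ^ 2 * #(realizations d F))) := by gcongr
          _ = _ := by field_simp; ring

theorem abs_sum_revCount_sub_revDefect_le (h : IsSparse d F D m 1) (hd : ∀ i, 0 ≤ d i)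
    (hw : ∀ i, 0 ≤ d i * (d i - 1)) (hs : ∑ i, d i ≤ m) (huv : F.Adj u v) :
    |∑ G ∈ realizations d F, revCount F u v G -
        d u * d v * (1 - revDefect d F m u v) * #(realizations d F)| ≤
      3095 * (D ^ 4 / m ^ 2) * (d u * d v * #(realizations d F)) := by
  have hcodegree := abs_le.1 (h.abs_sum_codegree_sub_le hd hw hs huv)
  have hpath := abs_le.1 (h.abs_sum_path_sub_le hd hw hs huv)
  have hclosable := abs_le.1 (h.abs_sum_closable_sub_le hd hs huv)
  rw [sum_congr rfl fun G hG => revCount_eq hG u v]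
  simp only [sum_sub_distrib, sum_add_distrib, sum_const, nsmul_eq_mul, revDefect]
  rw [abs_le]
  constructor <;> linarith

end IsSparse

end Defects

section Forward

variable {d : V → ℝ} {F G : SimpleGraph V} {D m : ℝ} {u v : V}

theorem sum_residualDegree_edge_mul {f : V → ℝ} (d : V → ℝ) (hfu : f u = 0) (hfv : f v = 0) :
    ∑ x, f x * residualDegree d (edge u v) x = ∑ x, f x * d x := by
  refine sum_congr rfl fun x _ => ?_
  by_cases hx : x = u ∨ x = v
  · rcases hx with rfl | rfl
    · rw [hfu, zero_mul, zero_mul]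
    · rw [hfv, zero_mul, zero_mul]
  · have : ∑ y, adjInd (edge u v) x y = 0 :=
      sum_eq_zero fun y _ => adjInd_of_not_adj (by simp_all [SimpleGraph.edge_adj])
    rw [residualDegree, this, sub_zero]

theorem adjInd_compl_mul_residualDegree (d : V → ℝ) (huv : F.Adj u v) (x : V) :
    adjInd Fᶜ u x * residualDegree d (edge u v) x = adjInd Fᶜ u x * d x := by
  rw [residualDegree_edge_apply d huv.ne]
  by_cases hxu : x = u
  · rw [hxu, adjInd_self, zero_mul, zero_mul]
  by_cases hxv : x = v
  · rw [hxv, adjInd_of_not_adj fun h => ((SimpleGraph.compl_adj ..).1 h).2 huv, zero_mul, zero_mul]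
  rw [if_neg hxu, if_neg hxv, sub_zero, sub_zero]

theorem not_sup_adj_of_mem (huv : Fᶜ.Adj u v)
    (hG : G ∈ realizations (residualDegree d (edge u v)) (F ⊔ edge u v)) : ¬ (G ⊔ F).Adj u v :=
  fun h => h.elim
    (fun h => disjoint_iff_forall_adj.1 (disjoint_of_mem hG) u v h (sup_edge_adj huv.ne))
    ((SimpleGraph.compl_adj ..).1 huv).2

/-- The number of oriented edges `xy` of `G` that obstruct a switching at both `u` and `v`, other
than those with `y = u` or `x = v`, when `uv` is an edge neither of `F` nor of `G`. -/
def doublyBlocked (F : SimpleGraph V) (u v : V) (G : SimpleGraph V) : ℝ :=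
  ∑ x, adjInd G v x * adjInd (G ⊔ F) u x + ∑ x, adjInd G u x * adjInd (G ⊔ F) v x +
    ∑ x, ∑ y, adjInd G x y * (adjInd (G ⊔ F) u x * adjInd (G ⊔ F) v y)

theorem sum_sum_adjInd_blocked_eq (huv : Fᶜ.Adj u v)
    (hG : G ∈ realizations (residualDegree d (edge u v)) (F ⊔ edge u v)) :
    ∑ x, ∑ y, adjInd G x y * ((1 - adjInd (G ⊔ (F ⊔ edge u v))ᶜ u x) *
      (1 - adjInd (G ⊔ (F ⊔ edge u v))ᶜ v y)) =
        residualDegree d (edge u v) u + residualDegree d (edge u v) v + doublyBlocked F u v G := by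
  classical
  have hdisj := disjoint_of_mem hG
  have hGuv : adjInd G u v = 0 :=
    adjInd_of_not_adj fun h => not_sup_adj_of_mem huv hG (Or.inl h)
  have hGF (a b) : adjInd G a b * adjInd (G ⊔ F) a b = adjInd G a b := by
    rw [adjInd_sup (hdisj.mono_right le_sup_left), mul_add, adjInd_mul_self,
      adjInd_mul_of_disjoint (hdisj.mono_right le_sup_left), add_zero]
  have hv (x) := SimpleGraph.edge_comm u v ▸
    one_sub_adjInd_compl_sup_edge huv.symm (SimpleGraph.edge_comm u v ▸ hdisj) x
  have hleft (w : V) (f : V → ℝ) : ∑ x, adjInd G x w * f x = ∑ x, adjInd G w x * f x :=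
    sum_congr rfl fun x _ => by rw [adjInd_comm]
  simp only [one_sub_adjInd_compl_sup_edge huv hdisj, hv, doublyBlocked, mul_add, add_mul,
    sum_add_distrib, mul_ite, ite_mul, mul_one, one_mul, mul_zero, zero_mul, sum_ite_eq',
    sum_const_zero, sum_ite_irrel, mem_univ, if_true, hleft, hGF, hGuv, adjInd_comm G v u,
    adjInd_self, sum_adjInd_of_mem hG]
  ring

theorem fwdCount_sup_edge_eq (huv : Fᶜ.Adj u v)
    (hG : G ∈ realizations (residualDegree d (edge u v)) (F ⊔ edge u v)) :
    fwdCount (F ⊔ edge u v) u v G = ∑ i, d i - (d u + d v) - ∑ x, adjInd F u x * d x -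
      ∑ x, adjInd F v x * d x - ∑ x, adjInd G u x * residualDegree d (edge u v) x -
        ∑ x, adjInd G v x * residualDegree d (edge u v) x + doublyBlocked F u v G := by
  classical
  have hdisj := disjoint_of_mem hG
  have hFuv : adjInd F u v = 0 := adjInd_of_not_adj ((SimpleGraph.compl_adj ..).1 huv).2
  have hv (x) := SimpleGraph.edge_comm u v ▸
    one_sub_adjInd_compl_sup_edge huv.symm (SimpleGraph.edge_comm u v ▸ hdisj) x
  rw [fwdCount_eq hG, sum_sum_adjInd_blocked_eq huv hG, sum_residualDegree_edge d huv.ne,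
    ← sum_residualDegree_edge_mul d (adjInd_self F u) hFuv,
    ← sum_residualDegree_edge_mul d ((adjInd_comm F v u).trans hFuv) (adjInd_self F v)]
  simp only [one_sub_adjInd_compl_sup_edge huv hdisj, hv, adjInd_sup (hdisj.mono_right le_sup_left),
    add_mul, sum_add_distrib, ite_mul, one_mul, zero_mul, sum_ite_eq', mem_univ, if_true]
  simp only [residualDegree_edge_apply d huv.ne, huv.ne, huv.ne', if_true, if_false]
  ring

theorem doublyBlocked_nonneg (F : SimpleGraph V) (u v : V) (G : SimpleGraph V) :
    0 ≤ doublyBlocked F u v G := by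
  have hG := adjInd_nonneg G
  have hGF := adjInd_nonneg (G ⊔ F)
  exact add_nonneg (add_nonneg (sum_nonneg fun x _ => mul_nonneg (hG v x) (hGF u x))
    (sum_nonneg fun x _ => mul_nonneg (hG u x) (hGF v x))) (sum_nonneg fun x _ =>
      sum_nonneg fun y _ => mul_nonneg (hG x y) (mul_nonneg (hGF u x) (hGF v y)))

/-- The expected correction, over the graphs from which `uv` has been removed, to the number of
edges that can be traded together with `uv`. -/
def fwdDefect (d : V → ℝ) (F : SimpleGraph V) (m : ℝ) (u v : V) : ℝ :=
  -2 * (d u + d v) + 2 - ∑ x, adjInd F u x * d x - ∑ x, adjInd F v x * d x -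
    (d u + d v - 2) * (∑ x, d x * (d x - 1)) / m

/-- An upper bound for the proportion of sparse graphs `G` such that `xy` is an edge of
`G ⊔ F`. -/
def edgeBound (d : V → ℝ) (F : SimpleGraph V) (m : ℝ) (x y : V) : ℝ :=
  2 * (d x * d y) / m + adjInd F x y

omit [Fintype V] in
theorem edgeBound_nonneg (hd : ∀ i, 0 ≤ d i) (F : SimpleGraph V) (hm : 0 ≤ m) (x y : V) :
    0 ≤ edgeBound d F m x y := by
  have := mul_nonneg (hd x) (hd y)
  have := adjInd_nonneg F x y
  unfold edgeBound
  positivity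

theorem sum_mul_edgeBound_nonneg (hd : ∀ i, 0 ≤ d i) (F : SimpleGraph V) (hm : 0 ≤ m) (x : V) :
    0 ≤ ∑ y, d y * edgeBound d F m x y :=
  sum_nonneg fun y _ => mul_nonneg (hd y) (edgeBound_nonneg hd F hm x y)

namespace IsSparse

theorem sum_adjInd_mul_adjInd_sup_le (h : IsSparse d F D m 0) (hd : ∀ i, 0 ≤ d i)
    (huv : Fᶜ.Adj u v) {p q r s : V} (hne : s(r, s) ≠ s(p, q)) :
    ∑ G ∈ realizations (residualDegree d (edge u v)) (F ⊔ edge u v),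
        adjInd G p q * adjInd (G ⊔ F) r s ≤
      2 * (d p * d q) / m * edgeBound d F m r s *
        #(realizations (residualDegree d (edge u v)) (F ⊔ edge u v)) := by
  have h' := h.residualDegree_sup_edge huv
  have hle := residualDegree_le d (edge u v)
  have hpair := h'.sum_adjInd_mul_le (by norm_num) hd hle (p := p) (q := q) fun _ => hne
  have hone := mul_le_mul_of_nonneg_right
    (h'.sum_adjInd_le_mul_card (by norm_num) hd hle p q) (adjInd_nonneg F r s)
  rw [sum_congr rfl fun G hG => by
    rw [adjInd_sup ((disjoint_of_mem hG).mono_right le_sup_left), mul_add]]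
  rw [sum_add_distrib, ← sum_mul]
  refine (add_le_add hpair hone).trans_eq ?_
  unfold edgeBound
  have := h.total_pos
  field_simp
  ring

theorem sum_adjInd_mul_adjInd_sup_mul_adjInd_sup_le (h : IsSparse d F D m 0)
    (hd : ∀ i, 0 ≤ d i) (huv : Fᶜ.Adj u v) (x y : V) :
    ∑ G ∈ realizations (residualDegree d (edge u v)) (F ⊔ edge u v),
        adjInd G x y * (adjInd (G ⊔ F) u x * adjInd (G ⊔ F) v y) ≤
      2 * (d x * d y) / m * (edgeBound d F m u x *
        edgeBound d F m v y) *
        #(realizations (residualDegree d (edge u v)) (F ⊔ edge u v)) := by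
  have hm := h.total_pos
  by_cases hadj : (x ≠ u ∧ x ≠ v) ∧ y ≠ u ∧ y ≠ v
  swap
  · rw [sum_eq_zero fun G hG => ?_]
    · have := mul_nonneg (hd x) (hd y)
      have := edgeBound_nonneg hd F hm.le u x
      have := edgeBound_nonneg hd F hm.le v y
      positivity
    · have hGuv : adjInd (G ⊔ F) u v = 0 := adjInd_of_not_adj (not_sup_adj_of_mem huv hG)
      have hGvu := (adjInd_comm (G ⊔ F) v u).trans hGuv
      by_contra hne
      refine hadj ⟨⟨?_, ?_⟩, ?_, ?_⟩ <;> rintro rfl <;>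
        simp only [adjInd_self, hGuv, hGvu, mul_zero, zero_mul, not_true_eq_false] at hne
  obtain ⟨⟨hxu, hxv⟩, hyu, hyv⟩ := hadj
  have h' := h.residualDegree_sup_edge huv
  have hle := residualDegree_le d (edge u v)
  have hpath := h'.sum_adjInd_path_le (by norm_num) hd hle (sup_edge_adj huv.ne) x y
  have hux := mul_le_mul_of_nonneg_right (h'.sum_adjInd_mul_le (by norm_num) hd hle (p := x)
    (q := y) (r := u) (s := x) fun _ => by simp [hxu.symm, hyu.symm]) (adjInd_nonneg F v y)
  have hvy := mul_le_mul_of_nonneg_right (h'.sum_adjInd_mul_le (by norm_num) hd hle (p := x)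
    (q := y) (r := v) (s := y) fun _ => by simp [hxv.symm, hyv.symm]) (adjInd_nonneg F u x)
  have hxy := mul_le_mul_of_nonneg_right (h'.sum_adjInd_le_mul_card (by norm_num) hd hle x y)
    (mul_nonneg (adjInd_nonneg F u x) (adjInd_nonneg F v y))
  rw [sum_mul] at hux hvy hxy
  have hsplit {G} (hG : G ∈ realizations (residualDegree d (edge u v)) (F ⊔ edge u v)) :
      adjInd G x y * (adjInd (G ⊔ F) u x * adjInd (G ⊔ F) v y) =
        adjInd G u x * (adjInd G v y * adjInd G x y) + adjInd G x y * adjInd G u x * adjInd F v y +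
          adjInd G x y * adjInd G v y * adjInd F u x +
            adjInd G x y * (adjInd F u x * adjInd F v y) := by
    simp only [adjInd_sup ((disjoint_of_mem hG).mono_right le_sup_left)]
    ring
  rw [sum_congr rfl fun G hG => hsplit hG]
  simp only [sum_add_distrib]
  refine (add_le_add (add_le_add (add_le_add hpath hux) hvy) hxy).trans_eq ?_
  unfold edgeBound
  field_simp
  ring

theorem sum_mul_edgeBound_le (h : IsSparse d F D m 0) (hd : ∀ i, 0 ≤ d i)
    (hs : ∑ i, d i ≤ m) (u : V) :
    ∑ x, d x * edgeBound d F m u x ≤ 3 * D ^ 2 := by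
  have hm := h.total_pos
  have hD := h.pos
  have hF : ∑ x, adjInd F u x * d x ≤ D * D :=
    sum_mul_le_mul_of_le (adjInd_nonneg F u) h.le hD.le (by linarith [h.sum_adjInd_le u])
  have hsq : ∑ x, d x * d x ≤ m * D := sum_mul_le_mul_of_le hd h.le hD.le hs
  unfold edgeBound
  calc _ = 2 * d u / m * ∑ x, d x * d x + ∑ x, adjInd F u x * d x := by
        rw [mul_sum, ← sum_add_distrib]
        exact sum_congr rfl fun x _ => by ring
    _ ≤ 2 * D / m * (m * D) + D * D := by
        gcongr
        · exact sum_nonneg fun x _ => mul_nonneg (hd x) (hd x)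
        · exact h.le u
    _ = _ := by field_simp; ring

theorem sum_sum_adjInd_mul_adjInd_sup_le (h : IsSparse d F D m 0) (hd : ∀ i, 0 ≤ d i)
    (hs : ∑ i, d i ≤ m) (huv : Fᶜ.Adj u v) {a b : V} (hab : a ≠ b) :
    ∑ G ∈ realizations (residualDegree d (edge u v)) (F ⊔ edge u v),
        ∑ x, adjInd G a x * adjInd (G ⊔ F) b x ≤
      6 * (D ^ 3 / m) * #(realizations (residualDegree d (edge u v)) (F ⊔ edge u v)) := by
  have hm := h.total_pos
  have hD := h.pos
  have hpos := sum_mul_edgeBound_nonneg hd F hm.le b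
  rw [sum_comm]
  set N := (#(realizations (residualDegree d (edge u v)) (F ⊔ edge u v)) : ℝ)
  calc _ ≤ ∑ x, 2 * (d a * d x) / m * edgeBound d F m b x * N :=
        sum_le_sum fun x _ => h.sum_adjInd_mul_adjInd_sup_le hd huv (by simp [hab.symm]; grind)
    _ = 2 * d a / m * (∑ x, d x * edgeBound d F m b x) * N := by
        rw [mul_sum, sum_mul]
        exact sum_congr rfl fun x _ => by ring
    _ ≤ 2 * D / m * (3 * D ^ 2) * N := by
        gcongr
        · exact h.le a
        · exact h.sum_mul_edgeBound_le hd hs b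
    _ = _ := by ring

theorem sum_doublyBlocked_le (h : IsSparse d F D m 0) (hd : ∀ i, 0 ≤ d i)
    (hs : ∑ i, d i ≤ m) (huv : Fᶜ.Adj u v) :
    ∑ G ∈ realizations (residualDegree d (edge u v)) (F ⊔ edge u v), doublyBlocked F u v G ≤
      30 * (D ^ 4 / m) * #(realizations (residualDegree d (edge u v)) (F ⊔ edge u v)) := by
  have hm := h.total_pos
  have hD := h.one_le
  have hvu := h.sum_sum_adjInd_mul_adjInd_sup_le hd hs huv huv.ne'
  have huv' := h.sum_sum_adjInd_mul_adjInd_sup_le hd hs huv huv.ne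
  have hpos := sum_mul_edgeBound_nonneg hd F hm.le v
  simp only [doublyBlocked, sum_add_distrib]
  set N := (#(realizations (residualDegree d (edge u v)) (F ⊔ edge u v)) : ℝ)
  have hpath : ∑ G ∈ realizations (residualDegree d (edge u v)) (F ⊔ edge u v), ∑ x, ∑ y,
      adjInd G x y * (adjInd (G ⊔ F) u x * adjInd (G ⊔ F) v y) ≤ 18 * (D ^ 4 / m) * N := by
    rw [sum_comm]
    simp_rw [sum_comm (s := realizations _ _)]
    calc _ ≤ ∑ x, ∑ y, 2 * (d x * d y) / m * (edgeBound d F m u x *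
          edgeBound d F m v y) * N :=
          sum_le_sum fun x _ => sum_le_sum fun y _ =>
            h.sum_adjInd_mul_adjInd_sup_mul_adjInd_sup_le hd huv x y
      _ = 2 / m * ((∑ x, d x * edgeBound d F m u x) *
          ∑ y, d y * edgeBound d F m v y) * N := by
          rw [sum_mul_sum, mul_sum, sum_mul]
          refine sum_congr rfl fun x _ => ?_
          rw [mul_sum, sum_mul]
          exact sum_congr rfl fun y _ => by ring
      _ ≤ 2 / m * ((3 * D ^ 2) * (3 * D ^ 2)) * N := by
          gcongr
          · exact h.sum_mul_edgeBound_le hd hs u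
          · exact h.sum_mul_edgeBound_le hd hs v
      _ = _ := by ring
  have hcube : D ^ 3 / m * N ≤ D ^ 4 / m * N := by gcongr; norm_num
  linarith

theorem approx_sum_adjInd_mul_residualDegree (h : IsSparse d F D m 0) (huv : Fᶜ.Adj u v)
    (hG : G ∈ realizations (residualDegree d (edge u v)) (F ⊔ edge u v)) :
    Approx (220 * (D ^ 2 / m))
      (∑ G ∈ realizations (residualDegree d (edge u v)) (F ⊔ edge u v),
        ∑ x, adjInd G u x * residualDegree d (edge u v) x)
      ((d u - 1) / m * (∑ x, adjInd (F ⊔ edge u v)ᶜ u x * (d x * d x)) *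
        #(realizations (residualDegree d (edge u v)) (F ⊔ edge u v))) := by
  classical
  have hu : residualDegree d (edge u v) u = d u - 1 := by
    simp [residualDegree_edge_apply d huv.ne, huv.ne]
  have happrox := Approx.sum (s := univ) fun x _ => ((h.residualDegree_sup_edge
    huv).approx_sum_adjInd (by norm_num) u x).const_mul (nonneg_of_mem hG x)
  rw [sum_comm]
  simp_rw [mul_comm _ (residualDegree d (edge u v) _), ← mul_sum]
  convert happrox using 1
  rw [hu, mul_sum, sum_mul]
  refine sum_congr rfl fun x _ => ?_
  linear_combination (residualDegree d (edge u v) x + d x) * (-(d u - 1) / m *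
    #(realizations (residualDegree d (edge u v)) (F ⊔ edge u v))) *
      adjInd_compl_mul_residualDegree d (sup_edge_adj (F := F) huv.ne) x

theorem abs_sum_adjInd_mul_residualDegree_sub_le (h : IsSparse d F D m 0) (hd : ∀ i, 0 ≤ d i)
    (hs : ∑ i, d i ≤ m) (huv : Fᶜ.Adj u v) :
    |∑ G ∈ realizations (residualDegree d (edge u v)) (F ⊔ edge u v),
          ∑ x, adjInd G u x * residualDegree d (edge u v) x -
        (d u - 1) / m * (∑ x, d x * d x) *
          #(realizations (residualDegree d (edge u v)) (F ⊔ edge u v))| ≤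
      223 * (D ^ 4 / m) * #(realizations (residualDegree d (edge u v)) (F ⊔ edge u v)) := by
  rcases (realizations (residualDegree d (edge u v)) (F ⊔ edge u v)).eq_empty_or_nonempty
    with hempty | ⟨G₀, hG₀⟩
  · simp [hempty]
  have hm := h.total_pos
  have hD := h.pos
  have hu0 : 0 ≤ d u - 1 := by
    have := nonneg_of_mem hG₀ u
    rwa [residualDegree_edge_apply d huv.ne, if_pos rfl, if_neg huv.ne, sub_zero] at this
  have huD : d u - 1 ≤ D := by linarith [h.le u]
  have hsq : ∑ x, d x * d x ≤ m * D := sum_mul_le_mul_of_le hd h.le h.pos.le hs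
  have hsq0 : 0 ≤ ∑ x, d x * d x := sum_nonneg fun x _ => mul_self_nonneg (d x)
  have hsub : IsSparse d (F ⊔ edge u v) D m 1 := by simpa using h.sup_edge huv
  have hle : ∑ x, adjInd (F ⊔ edge u v)ᶜ u x * (d x * d x) ≤ ∑ x, d x * d x :=
    sum_le_sum fun x _ => mul_le_of_le_one_left (mul_self_nonneg _) (adjInd_le_one _ _ _)
  have hgap : ∑ x, (1 - adjInd (F ⊔ edge u v)ᶜ u x) * (d x * d x) ≤ 3 * D * D ^ 2 :=
    hsub.sum_one_sub_adjInd_compl_mul_le (fun x => by nlinarith [hd x, h.le x]) (sq_nonneg D) u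
  have happrox := h.approx_sum_adjInd_mul_residualDegree huv hG₀
  set N := (#(realizations (residualDegree d (edge u v)) (F ⊔ edge u v)) : ℝ)
  calc _ ≤ 220 * (D ^ 2 / m) * ((d u - 1) / m * (∑ x, d x * d x) * N) +
        (d u - 1) / m * (3 * D * D ^ 2) * N := by
        refine happrox.abs_sub_le (by positivity) (by gcongr) ?_
        rw [← sub_mul, ← mul_sub, ← sum_sub_distrib]
        simp only [sub_mul, one_mul] at hgap ⊢
        gcongr
    _ ≤ 220 * (D ^ 2 / m) * (D / m * (m * D) * N) + D / m * (3 * D * D ^ 2) * N := by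
        gcongr
    _ = 223 * (D ^ 4 / m) * N := by field_simp; ring

theorem abs_sum_fwdCount_sub_fwdDefect_le (h : IsSparse d F D m 0) (hd : ∀ i, 0 ≤ d i)
    (hs : ∑ i, d i = m) (huv : Fᶜ.Adj u v) :
    |∑ G ∈ realizations (residualDegree d (edge u v)) (F ⊔ edge u v),
          fwdCount (F ⊔ edge u v) u v G -
        (m + fwdDefect d F m u v) *
          #(realizations (residualDegree d (edge u v)) (F ⊔ edge u v))| ≤
      476 * (D ^ 4 / m) * #(realizations (residualDegree d (edge u v)) (F ⊔ edge u v)) := by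
  have hm := h.total_pos
  have hu := abs_le.1 (h.abs_sum_adjInd_mul_residualDegree_sub_le hd hs.le huv)
  have hv := abs_le.1 (SimpleGraph.edge_comm u v ▸
    h.abs_sum_adjInd_mul_residualDegree_sub_le hd hs.le huv.symm)
  have hblocked := h.sum_doublyBlocked_le hd hs.le huv
  have hblocked0 : 0 ≤ ∑ G ∈ realizations (residualDegree d (edge u v)) (F ⊔ edge u v),
      doublyBlocked F u v G := sum_nonneg fun G _ => doublyBlocked_nonneg F u v G
  have hsq : ∑ x, d x * d x = ∑ x, d x * (d x - 1) + m := by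
    rw [← hs, ← sum_add_distrib]
    exact sum_congr rfl fun x _ => by ring
  rw [sum_congr rfl fun G hG => fwdCount_sup_edge_eq huv hG, hs]
  simp only [sum_sub_distrib, sum_add_distrib, sum_const, nsmul_eq_mul, hsq] at hu hv ⊢
  set N := (#(realizations (residualDegree d (edge u v)) (F ⊔ edge u v)) : ℝ)
  have hmain : (m + fwdDefect d F m u v) * N =
      N * m - N * (d u + d v) - N * ∑ x, adjInd F u x * d x - N * ∑ x, adjInd F v x * d x -
        (d u - 1) / m * (∑ x, d x * (d x - 1) + m) * N -
          (d v - 1) / m * (∑ x, d x * (d x - 1) + m) * N := by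
    unfold fwdDefect
    field_simp
    ring
  rw [hmain, abs_le]
  constructor <;> linarith

end IsSparse

end Forward

section Probability

variable {d : V → ℝ} {F G : SimpleGraph V} {D m : ℝ} {u v : V}

theorem mul_sub_one_nonneg_of_mem (hG : G ∈ realizations d F) (i : V) : 0 ≤ d i * (d i - 1) := by
  classical
  obtain ⟨k, hk⟩ : ∃ k : ℕ, d i = k := ⟨#{j | G.Adj i j}, by
    simp [← sum_adjInd_of_mem hG i, adjInd]⟩
  rcases k.eq_zero_or_pos with h0 | h0
  · simp [hk, h0]
  · have : (1 : ℝ) ≤ k := by exact_mod_cast h0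
    exact mul_nonneg (nonneg_of_mem hG i) (by linarith)

theorem exists_eq_one_add_mul {P T ε : ℝ} (hε : 0 ≤ ε) (hT : 0 ≤ T) (h : |P - T| ≤ ε * T) :
    ∃ θ : ℝ, |θ| ≤ ε ∧ P = (1 + θ) * T := by
  rcases hT.eq_or_lt with rfl | hT
  · exact ⟨0, by simpa using hε, by simpa [sub_eq_zero] using h⟩
  · refine ⟨(P - T) / T, ?_, by field_simp; ring⟩
    rwa [abs_div, abs_of_pos hT, div_le_iff₀ hT]

theorem exists_eq_one_add_mul_mul {P s t b ε : ℝ} (hs : 0 ≤ s) (hP0 : 0 ≤ P) (hP : P ≤ 2 * s)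
    (hε : ε ≤ 1 / 10000) (hb : b ≤ 4 * ε) (ht : |t| ≤ 8 * ε)
    (h : |P * (1 + t) - s * (1 - b)| ≤ 4055 * ε ^ 2 * s) :
    ∃ θ : ℝ, |θ| ≤ 10000 * ε ^ 2 ∧ P = (1 + θ) * (s * (1 - b) * (1 - t)) := by
  have ht' := abs_le.1 ht
  have hmain : 1 / 2 ≤ (1 - b) * (1 - t) := by nlinarith
  have htsq : t ^ 2 ≤ 64 * ε ^ 2 := by nlinarith
  have hεs : 0 ≤ ε ^ 2 * s := by positivity
  refine exists_eq_one_add_mul (by positivity) (by rw [mul_assoc]; positivity) ?_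
  calc |P - s * (1 - b) * (1 - t)|
      = |(P * (1 + t) - s * (1 - b)) * (1 - t) + P * t ^ 2| := by ring_nf
    _ ≤ |P * (1 + t) - s * (1 - b)| * |1 - t| + |P * t ^ 2| := by
        rw [← abs_mul]
        exact abs_add_le _ _
    _ ≤ 4055 * ε ^ 2 * s * (101 / 100) + 2 * s * (64 * ε ^ 2) := by
        rw [abs_of_nonneg (by linarith : 0 ≤ 1 - t), abs_of_nonneg (by positivity : 0 ≤ P * t ^ 2)]
        gcongr <;> linarith
    _ ≤ 10000 * ε ^ 2 * s * (1 / 2) := by linarith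
    _ ≤ 10000 * ε ^ 2 * s * ((1 - b) * (1 - t)) := by gcongr
    _ = _ := by ring

theorem closableSum_nonneg (hd : ∀ i, 0 ≤ d i) (F : SimpleGraph V) (u v : V) :
    0 ≤ closableSum d F u v :=
  sum_nonneg fun x _ => sum_nonneg fun y _ => mul_nonneg (adjInd_nonneg _ _ _)
    (mul_nonneg (mul_nonneg (adjInd_nonneg _ _ _) (adjInd_nonneg _ _ _))
      (mul_nonneg (hd x) (hd y)))

theorem revDefect_nonneg (hd : ∀ i, 0 ≤ d i) (hw : ∀ i, 0 ≤ d i * (d i - 1)) (hm : 0 ≤ m)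
    (F : SimpleGraph V) (u v : V) : 0 ≤ revDefect d F m u v := by
  have := closableSum_nonneg hd F u v
  have : 0 ≤ ∑ x, d x * (d x - 1) := sum_nonneg fun x _ => hw x
  unfold revDefect
  positivity

namespace IsSparse

theorem revDefect_le (h : IsSparse d F D m 1) (hd : ∀ i, 0 ≤ d i) (hw : ∀ i, 0 ≤ d i * (d i - 1))
    (hs : ∑ i, d i ≤ m) (u v : V) : revDefect d F m u v ≤ 4 * (D ^ 2 / m) := by
  have hm := h.total_pos
  have hD := h.one_le
  have hsum0 : 0 ≤ ∑ x, d x * (d x - 1) := sum_nonneg fun x _ => hw x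
  have hsum := h.sum_mul_sub_one_le hd hs
  have hclosable := h.closableSum_le hd hs u v
  unfold revDefect
  calc _ ≤ (D * m) ^ 2 / m ^ 3 + D * m / m ^ 2 + 2 * D * (D * m) / m ^ 2 := by gcongr
    _ = 3 * (D ^ 2 / m) + D / m := by field_simp; ring
    _ ≤ 3 * (D ^ 2 / m) + D ^ 2 / m := by
        gcongr
        exact le_self_pow₀ hD two_ne_zero
    _ = _ := by ring

theorem abs_fwdDefect_add_le (h : IsSparse d F D m 0) (hd : ∀ i, 0 ≤ d i)
    (hw : ∀ i, 0 ≤ d i * (d i - 1)) (hs : ∑ i, d i ≤ m) (huv : Fᶜ.Adj u v) :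
    |fwdDefect d F m u v + d u * d v| ≤ 8 * D ^ 2 := by
  have hm := h.total_pos
  have hD := h.one_le
  have hsub : IsSparse d (F ⊔ edge u v) D m 1 := by simpa using h.sup_edge huv
  have hsum0 : 0 ≤ ∑ x, d x * (d x - 1) := sum_nonneg fun x _ => hw x
  have hsum := hsub.sum_mul_sub_one_le hd hs
  have hF0 (w) : 0 ≤ ∑ x, adjInd F w x * d x :=
    sum_nonneg fun x _ => mul_nonneg (adjInd_nonneg F w x) (hd x)
  have hF (w) : ∑ x, adjInd F w x * d x ≤ D * D :=
    sum_mul_le_mul_of_le (adjInd_nonneg F w) h.le h.pos.le (by linarith [h.sum_adjInd_le w])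
  have huD := h.le u
  have hvD := h.le v
  have huv0 := mul_nonneg (hd u) (hd v)
  have huvD : d u * d v ≤ D * D := mul_le_mul huD hvD (hd v) h.pos.le
  have hlin : |(d u + d v - 2) * (∑ x, d x * (d x - 1)) / m| ≤ 2 * D * D := by
    rw [abs_div, abs_mul, abs_of_nonneg hsum0, abs_of_pos hm, div_le_iff₀ hm]
    calc _ ≤ 2 * D * (D * m) := by
          gcongr
          rw [abs_le]
          constructor <;> linarith [hd u, hd v]
      _ = _ := by ring
  unfold fwdDefect
  rw [abs_le] at hlin ⊢
  constructor <;> nlinarith [hF0 u, hF0 v, hF u, hF v, hd u, hd v]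

theorem abs_card_residualDegree_sub_le (h : IsSparse d F D m 0) (hd : ∀ i, 0 ≤ d i)
    (hw : ∀ i, 0 ≤ d i * (d i - 1)) (hs : ∑ i, d i = m) (huv : Fᶜ.Adj u v) :
    |(m + (fwdDefect d F m u v + d u * d v)) *
          #(realizations (residualDegree d (edge u v)) (F ⊔ edge u v)) -
        d u * d v * (1 - revDefect d (F ⊔ edge u v) m u v) * #(realizations d F)| ≤
      4055 * (D ^ 4 / m ^ 2) * (d u * d v * #(realizations d F)) := by
  have hm := h.total_pos
  have hsub : IsSparse d (F ⊔ edge u v) D m 1 := by simpa using h.sup_edge huv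
  have hfwd := h.abs_sum_fwdCount_sub_fwdDefect_le hd hs huv
  have hrev := hsub.abs_sum_revCount_sub_revDefect_le hd hw hs.le (sup_edge_adj huv.ne)
  rw [sum_fwdCount (sup_edge_adj huv.ne)] at hfwd
  have hcard := card_realizations_eq_add (d := d) huv
  have hprob := h.sum_adjInd_le_mul_card (by norm_num) hd (fun _ => le_rfl) u v
  rw [sum_adjInd huv] at hprob
  have hdefect0 := revDefect_nonneg hd hw hm.le (F ⊔ edge u v) u v
  have hdefect := hsub.revDefect_le hd hw hs.le u v
  have hdegree0 := mul_nonneg (hd u) (hd v)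
  have hdegree : d u * d v ≤ D ^ 2 :=
    (mul_le_mul (h.le u) (h.le v) (hd v) h.pos.le).trans_eq (sq D).symm
  set N := (#(realizations d F) : ℝ)
  set N₁ := (#(realizations (residualDegree d (edge u v)) (F ⊔ edge u v)) : ℝ)
  have hN₁ : 0 ≤ N₁ := Nat.cast_nonneg _
  have hcross : d u * d v * revDefect d (F ⊔ edge u v) m u v * N₁ ≤ 4 * (D ^ 4 / m * N₁) :=
    calc _ ≤ D ^ 2 * (4 * (D ^ 2 / m)) * N₁ := by gcongr
      _ = _ := by ring
  have hcross0 : 0 ≤ d u * d v * revDefect d (F ⊔ edge u v) m u v * N₁ := by positivity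
  have herr : D ^ 4 / m * N₁ ≤ 2 * (D ^ 4 / m ^ 2 * (d u * d v * N)) :=
    calc _ ≤ D ^ 4 / m * (2 * (d u * d v) / m * N) := by gcongr
      _ = _ := by field_simp
  have herr' : 0 ≤ D ^ 4 / m ^ 2 * (d u * d v) * N₁ := by positivity
  rw [hcard] at herr ⊢
  rw [abs_le] at hfwd hrev ⊢
  constructor <;> linarith

theorem exists_sum_adjInd_div_card_eq (h : IsSparse d F D m 0) (hs : ∑ i, d i = m)
    (huv : Fᶜ.Adj u v) (hne : (realizations d F).Nonempty) :
    ∃ θ : ℝ, |θ| ≤ 10000 * (D ^ 2 / m) ^ 2 ∧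
      (∑ G ∈ realizations d F, adjInd G u v) / #(realizations d F) =
        (1 + θ) * (d u * d v / m * (1 - revDefect d (F ⊔ edge u v) m u v) *
          (1 - (fwdDefect d F m u v + d u * d v) / m)) := by
  obtain ⟨G₀, hG₀⟩ := hne
  have hd := nonneg_of_mem hG₀
  have hw := mul_sub_one_nonneg_of_mem hG₀
  have hm := h.total_pos
  have hsub : IsSparse d (F ⊔ edge u v) D m 1 := by simpa using h.sup_edge huv
  have hcard := h.abs_card_residualDegree_sub_le hd hw hs huv
  have hprob := h.sum_adjInd_le_mul_card (by norm_num) hd (fun _ => le_rfl) u v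
  rw [← sum_adjInd huv] at hcard
  have hP : 0 ≤ ∑ G ∈ realizations d F, adjInd G u v := sum_nonneg fun G _ => adjInd_nonneg G u v
  have hN : (0 : ℝ) < #(realizations d F) := by exact_mod_cast card_pos.2 ⟨G₀, hG₀⟩
  have hq := mul_nonneg (hd u) (hd v)
  set P := ∑ G ∈ realizations d F, adjInd G u v
  set N := (#(realizations d F) : ℝ)
  set t := fwdDefect d F m u v + d u * d v
  set b := revDefect d (F ⊔ edge u v) m u v
  refine exists_eq_one_add_mul_mul (by positivity) (by positivity) ?_ h.sq_div_le
    (hsub.revDefect_le hd hw hs.le u v) ?_ ?_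
  · rw [div_le_iff₀ hN]
    exact hprob.trans_eq (by ring)
  · rw [abs_div, abs_of_pos hm, ← mul_div_assoc]
    gcongr
    exact h.abs_fwdDefect_add_le hd hw hs.le huv
  · have hdiv : P / N * (1 + t / m) - d u * d v / m * (1 - b) =
        ((m + t) * P - d u * d v * (1 - b) * N) / (m * N) := by field_simp
    rw [hdiv, abs_div, abs_of_pos (mul_pos hm hN), div_le_iff₀ (mul_pos hm hN)]
    exact hcard.trans_eq (by field_simp)

end IsSparse

end Probability

section Bridge

theorem finsum_mem_neighborSet (G : SimpleGraph V) (v : V) (g : V → ℝ) :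
    ∑ᶠ x ∈ G.neighborSet v, g x = ∑ x, adjInd G v x * g x := by
  classical
  rw [finsum_mem_def, finsum_eq_sum_of_fintype]
  refine sum_congr rfl fun x _ => ?_
  simp [Set.indicator_apply, adjInd]

theorem ncard_neighborSet (G : SimpleGraph V) (v : V) :
    ((G.neighborSet v).ncard : ℝ) = ∑ x, adjInd G v x := by
  classical
  simp [Set.ncard_eq_toFinset_card', adjInd]

theorem two_mul_ncard_edgeSet (G : SimpleGraph V) :
    2 * (G.edgeSet.ncard : ℝ) = ∑ i, ∑ j, adjInd G i j := by
  classical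
  have hdeg (i : V) : ∑ j, adjInd G i j = G.degree i := by
    rw [← ncard_neighborSet, Set.ncard_eq_toFinset_card']
    rfl
  simp_rw [hdeg, ← SimpleGraph.coe_edgeFinset, Set.ncard_coe_finset]
  exact_mod_cast G.sum_degrees_eq_twice_card_edges.symm

theorem closableSum_sup_edge (d : V → ℝ) (F : SimpleGraph V) (u v : V) :
    closableSum d (F ⊔ edge u v) u v =
      ∑ᶠ p ∈ {p : V × V | F.Adj p.1 p.2 ∧ ¬ F.Adj p.1 u ∧ ¬ F.Adj p.2 v ∧ p.1 ≠ u ∧ p.1 ≠ v ∧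
        p.2 ≠ u ∧ p.2 ≠ v}, d p.1 * d p.2 := by
  classical
  rw [finsum_mem_def, finsum_eq_sum_of_fintype, Fintype.sum_prod_type]
  refine sum_congr rfl fun x _ => sum_congr rfl fun y _ => ?_
  have hmem : (F ⊔ edge u v).Adj x y ∧ (F ⊔ edge u v)ᶜ.Adj u x ∧ (F ⊔ edge u v)ᶜ.Adj v y ↔
      F.Adj x y ∧ ¬ F.Adj x u ∧ ¬ F.Adj y v ∧ x ≠ u ∧ x ≠ v ∧ y ≠ u ∧ y ≠ v := by
    simp only [SimpleGraph.compl_adj, SimpleGraph.sup_adj, SimpleGraph.edge_adj, F.adj_comm x u,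
      F.adj_comm y v]
    grind
  simp only [Set.indicator_apply, Set.mem_ofPred_eq, ← hmem, adjInd]
  split_ifs <;> simp_all

theorem one_sub_revDefect_sup_edge (d : V → ℝ) (F : SimpleGraph V) (m : ℝ) (u v : V) :
    1 - revDefect d (F ⊔ edge u v) m u v =
      1 - (∑ x, d x * (d x - 1)) ^ 2 / m ^ 3 - (∑ x, d x * (d x - 1)) / m ^ 2 -
        ∑ᶠ p ∈ {p : V × V | F.Adj p.1 p.2 ∧ ¬ F.Adj p.1 u ∧ ¬ F.Adj p.2 v ∧ p.1 ≠ u ∧ p.1 ≠ v ∧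
          p.2 ≠ u ∧ p.2 ≠ v}, d p.1 * d p.2 / m ^ 2 := by
  simp only [div_eq_mul_inv _ (m ^ 2), ← finsum_mem_mul, ← closableSum_sup_edge, revDefect]
  ring

theorem fwdDefect_eq_sub_finsum (d : V → ℝ) (F : SimpleGraph V) (m : ℝ) (u v : V) :
    fwdDefect d F m u v =
      -2 * (d u + d v) + 2 - ∑ᶠ x ∈ F.neighborSet u, d x - ∑ᶠ y ∈ F.neighborSet v, d y -
        (d u + d v - 2) * (∑ x, d x * (d x - 1)) / m := by
  simp only [fwdDefect, finsum_mem_neighborSet]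

end Bridge

end Realizations

section Main

open Finset

open SimpleGraph (edge)

variable {n : ℕ} {d dt : Fin n → ℕ} {H₁ H₂ : SimpleGraph (Fin n)} {u v : Fin n}

theorem deg_eq_sum_adjInd (G : SimpleGraph (Fin n)) (i : Fin n) :
    (deg G i : ℝ) = ∑ j, adjInd G i j := ncard_neighborSet G i

theorem natCast_eq_residualDegree (hle : ∀ i, deg H₁ i ≤ d i)
    (hdt : ∀ i, dt i = d i - deg H₁ i) :
    (fun i => (dt i : ℝ)) = residualDegree (fun i => (d i : ℝ)) H₁ := by
  funext i
  rw [hdt, Nat.cast_sub (hle i), deg_eq_sum_adjInd, residualDegree]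

theorem natCast_sum_sub_two_mul_nedges (hle : ∀ i, deg H₁ i ≤ d i)
    (hdt : ∀ i, dt i = d i - deg H₁ i) :
    ((∑ i, d i : ℕ) : ℝ) - 2 * nedges H₁ = (∑ i, dt i : ℕ) := by
  simp only [nedges, two_mul_ncard_edgeSet, Nat.cast_sum, ← sum_sub_distrib,
    congrFun (natCast_eq_residualDegree hle hdt), residualDegree]

theorem natCast_sum_mul_sub_one (dt : Fin n → ℕ) :
    ((∑ i, dt i * (dt i - 1) : ℕ) : ℝ) = ∑ i, (dt i : ℝ) * ((dt i : ℝ) - 1) := by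
  rw [Nat.cast_sum]
  refine sum_congr rfl fun i _ => ?_
  rcases (dt i).eq_zero_or_pos with h0 | h0
  · simp [h0]
  · rw [Nat.cast_mul, Nat.cast_sub h0, Nat.cast_one]

theorem prob_adj {base : SimpleGraph (Fin n) → Prop} {s : Finset (SimpleGraph (Fin n))}
    (hs : ∀ G, G ∈ s ↔ base G) (u v : Fin n) :
    prob base (fun G => G.Adj u v) = (∑ G ∈ s, adjInd G u v) / #s := by
  classical
  have hadj : ∑ G ∈ s, adjInd G u v = Nat.card {G // base G ∧ G.Adj u v} := by
    simp only [adjInd, sum_boole]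
    rw [Nat.subtype_card {G ∈ s | G.Adj u v} (by simp [hs])]
  rw [prob, hadj, Nat.subtype_card s hs]

open Classical in
theorem mem_realizations_filter_le {G : SimpleGraph (Fin n)} :
    G ∈ {G ∈ realizations (fun i => (d i : ℝ)) H₂ | H₁ ≤ G} ↔
      (∀ i, deg G i = d i) ∧ H₁ ≤ G ∧ Disjoint G.edgeSet H₂.edgeSet := by
  simp only [mem_filter, mem_realizations, ← deg_eq_sum_adjInd, Nat.cast_inj,
    SimpleGraph.disjoint_edgeSet]
  tauto

theorem prob_adj_eq (hdisj : Disjoint H₁.edgeSet H₂.edgeSet) (hle : ∀ i, deg H₁ i ≤ d i)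
    (hdt : ∀ i, dt i = d i - deg H₁ i) (huv : ¬ H₁.Adj u v) :
    prob (fun G => (∀ i, deg G i = d i) ∧ H₁ ≤ G ∧ Disjoint G.edgeSet H₂.edgeSet)
        (fun G => G.Adj u v) =
      (∑ G ∈ realizations (fun i => (dt i : ℝ)) (H₁ ⊔ H₂), adjInd G u v) /
        #(realizations (fun i => (dt i : ℝ)) (H₁ ⊔ H₂)) := by
  classical
  rw [SimpleGraph.disjoint_edgeSet, disjoint_comm] at hdisj
  have hadj (G : SimpleGraph (Fin n)) : adjInd (G ⊔ H₁) u v = adjInd G u v := by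
    simp [adjInd, huv]
  rw [prob_adj (fun G => mem_realizations_filter_le) u v, natCast_eq_residualDegree hle hdt,
    sup_comm H₁, card_eq_sum_ones, card_eq_sum_ones]
  push_cast
  rw [sum_realizations_filter_ge hdisj, sum_realizations_filter_ge hdisj]
  simp only [hadj]

theorem realizations_nonempty (hdisj : Disjoint H₁.edgeSet H₂.edgeSet)
    (hle : ∀ i, deg H₁ i ≤ d i) (hdt : ∀ i, dt i = d i - deg H₁ i)
    (hex : ∃ G : SimpleGraph (Fin n),
      (∀ i, deg G i = d i) ∧ H₁ ≤ G ∧ Disjoint G.edgeSet H₂.edgeSet) :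
    (realizations (fun i => (dt i : ℝ)) (H₁ ⊔ H₂)).Nonempty := by
  obtain ⟨G, hdeg, hG, hGH⟩ := hex
  rw [SimpleGraph.disjoint_edgeSet] at hdisj hGH
  rw [natCast_eq_residualDegree hle hdt, sup_comm]
  refine ⟨G \ H₁, (sup_mem_realizations_iff hdisj.symm disjoint_sdiff_self_left).1 ?_⟩
  rw [sdiff_sup_cancel hG, mem_realizations]
  exact ⟨fun i => by rw [← deg_eq_sum_adjInd, hdeg], hGH⟩

theorem prob_adj_eq_zero {base : SimpleGraph (Fin n) → Prop} (hbase : ∀ G, base G → deg G u = 0) :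
    prob base (fun G => G.Adj u v) = 0 := by
  have hempty : IsEmpty {G // base G ∧ G.Adj u v} := by
    refine ⟨fun ⟨G, hG, huv⟩ => ?_⟩
    have hnbr : G.neighborSet u = ∅ := (Set.ncard_eq_zero).1 (hbase G hG)
    exact hnbr.subset huv
  rw [prob, Nat.card_of_isEmpty, Nat.cast_zero, zero_div]

theorem isSparse_natCast {K m : ℝ} {Δ : ℕ} (hdisj : Disjoint H₁.edgeSet H₂.edgeSet)
    (hle : ∀ i, deg H₁ i ≤ d i) (hdt : ∀ i, dt i = d i - deg H₁ i) (hΔ : 1 ≤ Δ)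
    (hd : ∀ i, d i ≤ Δ) (hmax : (maxDeg H₂ : ℝ) ≤ K * Δ) (hm : ∑ i, (dt i : ℝ) = m)
    (hsq : 10000 * ((|K| + 1) * Δ) ^ 2 ≤ m) :
    IsSparse (fun i => (dt i : ℝ)) (H₁ ⊔ H₂) ((|K| + 1) * Δ) m 0 := by
  have hΔ' : (1 : ℝ) ≤ Δ := mod_cast hΔ
  have hKΔ : 0 ≤ |K| * Δ := by positivity
  refine ⟨by linarith, hsq, fun i => ?_, fun i => ?_, by simp [hm]⟩
  · have hdt_le : (dt i : ℝ) ≤ Δ := mod_cast hdt i ▸ (Nat.sub_le _ _).trans (hd i)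
    linarith
  · have h₁ : (deg H₁ i : ℝ) ≤ Δ := mod_cast (hle i).trans (hd i)
    have h₂ : (deg H₂ i : ℝ) ≤ |K| * Δ := calc
      (deg H₂ i : ℝ) ≤ maxDeg H₂ := mod_cast le_sup (f := deg H₂) (mem_univ i)
      _ ≤ K * Δ := hmax
      _ ≤ |K| * Δ := by gcongr; exact le_abs_self K
    rw [SimpleGraph.disjoint_edgeSet] at hdisj
    simp only [adjInd_sup hdisj, sum_add_distrib, ← deg_eq_sum_adjInd]
    linarith

theorem pow_four_div_sq_le {M Δ : ℕ} (hM : M = ∑ i, d i) (hd : ∀ i, d i ≤ Δ) :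
    (Δ : ℝ) ^ 4 / M ^ 2 ≤ Δ ^ 5 * n / M ^ 3 := by
  have hMn : (M : ℝ) ≤ n * Δ := by
    rw [hM]
    exact_mod_cast by simpa using sum_le_card_nsmul univ d Δ fun i _ => hd i
  rcases M.eq_zero_or_pos with h0 | h0
  · simp [h0]
  · calc (Δ : ℝ) ^ 4 / (M : ℝ) ^ 2 = (Δ : ℝ) ^ 4 * M / (M : ℝ) ^ 3 := by field_simp
      _ ≤ (Δ : ℝ) ^ 4 * (n * Δ) / (M : ℝ) ^ 3 := by gcongr
      _ = (Δ : ℝ) ^ 5 * n / (M : ℝ) ^ 3 := by ring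

end Main

theorem stmt1_general (K c : ℝ) (hc : 0 < c) :
    ∃ C δ : ℝ, 0 < C ∧ 0 < δ ∧
      ∀ (n : ℕ) (d : Fin n → ℕ) (M Δ : ℕ),
        M = ∑ i, d i → (∀ i, d i ≤ Δ) → (Δ : ℝ) ^ 2 ≤ δ * M →
        ∀ H₁ H₂ : SimpleGraph (Fin n),
        Disjoint H₁.edgeSet H₂.edgeSet →
        (∀ i, deg H₁ i ≤ d i) →
        (maxDeg H₂ : ℝ) ≤ K * Δ →
        ∀ dt : Fin n → ℕ, (∀ i, dt i = d i - deg H₁ i) →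
        ∀ Mt Mt2 : ℕ, Mt = ∑ i, dt i → Mt2 = ∑ i, dt i * (dt i - 1) →
        c * M ≤ (Mt : ℝ) →
        ∀ u v : Fin n, u ≠ v → ¬ (H₁ ⊔ H₂).Adj u v →
        ∀ W : Set (Fin n × Fin n),
        W = {p : Fin n × Fin n | (H₁ ⊔ H₂).Adj p.1 p.2 ∧ ¬ (H₁ ⊔ H₂).Adj p.1 u ∧
              ¬ (H₁ ⊔ H₂).Adj p.2 v ∧ p.1 ≠ u ∧ p.1 ≠ v ∧ p.2 ≠ u ∧ p.2 ≠ v} →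
        ∀ φ : ℝ,
        φ = -2 * ((dt u : ℝ) + (dt v : ℝ)) + 2
            - (∑ᶠ x ∈ (H₁ ⊔ H₂).neighborSet u, (dt x : ℝ))
            - (∑ᶠ y ∈ (H₁ ⊔ H₂).neighborSet v, (dt y : ℝ))
            - ((dt u : ℝ) + (dt v : ℝ) - 2) * (Mt2 : ℝ) / (Mt : ℝ)
            + (dt u : ℝ) * (dt v : ℝ) →
        (∃ G : SimpleGraph (Fin n),
          (∀ i, deg G i = d i) ∧ H₁ ≤ G ∧ Disjoint G.edgeSet H₂.edgeSet) →
        ∃ θ : ℝ, |θ| ≤ C * ((Δ : ℝ) ^ 4 / (M : ℝ) ^ 2) ∧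
          prob (fun G => (∀ i, deg G i = d i) ∧ H₁ ≤ G ∧ Disjoint G.edgeSet H₂.edgeSet)
              (fun G => G.Adj u v)
            = (1 + θ) * ((dt u : ℝ) * (dt v : ℝ) / (Mt : ℝ)) *
                (1 - (Mt2 : ℝ) ^ 2 / (Mt : ℝ) ^ 3 - (Mt2 : ℝ) / (Mt : ℝ) ^ 2
                  - ∑ᶠ p ∈ W, (dt p.1 : ℝ) * (dt p.2 : ℝ) / (Mt : ℝ) ^ 2) *
                (1 - φ / ((M : ℝ) - 2 * nedges H₁)) := by
  refine ⟨10000 * (|K| + 1) ^ 4 / c ^ 2, c / (10000 * (|K| + 1) ^ 2), by positivity,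
    by positivity, ?_⟩
  intro n d M Δ hM hd hδ H₁ H₂ hdisj hle hmax dt hdt Mt Mt2 hMt hMt2 hcM u v huv hF W hW φ hφ hex
  have hMt' : ∑ i, (dt i : ℝ) = Mt := by rw [hMt, Nat.cast_sum]
  have hF₁ : ¬ H₁.Adj u v := fun h => hF (.inl h)
  rcases Δ.eq_zero_or_pos with rfl | hΔ
  · have hdu : d u = 0 := Nat.le_zero.1 (hd u)
    refine ⟨0, by simp, ?_⟩
    rw [prob_adj_eq_zero fun G hG => (hG.1 u).trans hdu, hdt u, hdu]
    simp
  have hsq : 10000 * ((|K| + 1) * Δ) ^ 2 ≤ c * M := by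
    rw [div_mul_eq_mul_div, le_div_iff₀ (by positivity)] at hδ
    linarith
  have hcM_pos : 0 < c * M := lt_of_lt_of_le (by positivity) hsq
  have hsparse := isSparse_natCast hdisj hle hdt hΔ hd hmax hMt' (hsq.trans hcM)
  obtain ⟨θ, hθ, hprob⟩ := hsparse.exists_sum_adjInd_div_card_eq hMt'
    ((SimpleGraph.compl_adj _ _ _).2 ⟨huv, hF⟩) (realizations_nonempty hdisj hle hdt hex)
  refine ⟨θ, ?_, ?_⟩
  · calc |θ| ≤ 10000 * (((|K| + 1) * Δ) ^ 2 / Mt) ^ 2 := hθ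
      _ ≤ 10000 * (((|K| + 1) * Δ) ^ 2 / (c * M)) ^ 2 := by gcongr
      _ = 10000 * (|K| + 1) ^ 4 / c ^ 2 * (Δ ^ 4 / M ^ 2) := by ring
  · rw [prob_adj_eq hdisj hle hdt hF₁, hprob, one_sub_revDefect_sup_edge,
      fwdDefect_eq_sub_finsum, ← natCast_sum_mul_sub_one, ← hMt2, ← hφ, ← hW, ← mul_assoc,
      ← mul_assoc, hM, natCast_sum_sub_two_mul_nedges hle hdt, ← hMt]

/-- Improved conditional edge probability with relative error `O(Δ⁵n/M³)`. -/
theorem stmt1 (K c : ℝ) (hK : 1 ≤ K) (hc : 0 < c) :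
    ∃ C δ : ℝ, 0 < C ∧ 0 < δ ∧
      ∀ (n : ℕ) (d : Fin n → ℕ) (M Δ : ℕ),
        M = ∑ i, d i → Δ = Finset.univ.sup d →
        Even M → (Δ : ℝ) ^ 2 ≤ δ * M →
        ∀ H₁ H₂ : SimpleGraph (Fin n),
        Disjoint H₁.edgeSet H₂.edgeSet →
        (∀ i, deg H₁ i ≤ d i) →
        (maxDeg H₂ : ℝ) ≤ K * Δ →
        ∀ dt : Fin n → ℕ, (∀ i, dt i = d i - deg H₁ i) →
        ∀ Mt Mt2 : ℕ, Mt = ∑ i, dt i → Mt2 = ∑ i, dt i * (dt i - 1) →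
        c * M ≤ (Mt : ℝ) →
        ∀ u v : Fin n, u ≠ v → ¬ (H₁ ⊔ H₂).Adj u v →
        ∀ W : Set (Fin n × Fin n),
        W = {p : Fin n × Fin n | (H₁ ⊔ H₂).Adj p.1 p.2 ∧ ¬ (H₁ ⊔ H₂).Adj p.1 u ∧
              ¬ (H₁ ⊔ H₂).Adj p.2 v ∧ p.1 ≠ u ∧ p.1 ≠ v ∧ p.2 ≠ u ∧ p.2 ≠ v} →
        ∀ φ : ℝ,
        φ = -2 * ((dt u : ℝ) + (dt v : ℝ)) + 2
            - (∑ᶠ x ∈ (H₁ ⊔ H₂).neighborSet u, (dt x : ℝ))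
            - (∑ᶠ y ∈ (H₁ ⊔ H₂).neighborSet v, (dt y : ℝ))
            - ((dt u : ℝ) + (dt v : ℝ) - 2) * (Mt2 : ℝ) / (Mt : ℝ)
            + (dt u : ℝ) * (dt v : ℝ) →
        (∃ G : SimpleGraph (Fin n),
          (∀ i, deg G i = d i) ∧ H₁ ≤ G ∧ Disjoint G.edgeSet H₂.edgeSet) →
        ∃ θ : ℝ, |θ| ≤ C * (Δ : ℝ) ^ 5 * n / (M : ℝ) ^ 3 ∧
          prob (fun G => (∀ i, deg G i = d i) ∧ H₁ ≤ G ∧ Disjoint G.edgeSet H₂.edgeSet)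
              (fun G => G.Adj u v)
            = (1 + θ) * ((dt u : ℝ) * (dt v : ℝ) / (Mt : ℝ)) *
                (1 - (Mt2 : ℝ) ^ 2 / (Mt : ℝ) ^ 3 - (Mt2 : ℝ) / (Mt : ℝ) ^ 2
                  - ∑ᶠ p ∈ W, (dt p.1 : ℝ) * (dt p.2 : ℝ) / (Mt : ℝ) ^ 2) *
                (1 - φ / ((M : ℝ) - 2 * nedges H₁)) := by
  obtain ⟨C, δ, hC, hδ, h⟩ := stmt1_general K c hc
  refine ⟨C, δ, hC, hδ, fun n d M Δ hM hΔ _ hsq H₁ H₂ hdisj hle hmax dt hdt Mt Mt2 hMt hMt2 hcM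
    u v huv hF W hW φ hφ hex => ?_⟩
  have hd (i : Fin n) : d i ≤ Δ := hΔ ▸ Finset.le_sup (Finset.mem_univ i)
  obtain ⟨θ, hθ, hprob⟩ := h n d M Δ hM hd hsq H₁ H₂ hdisj hle hmax dt hdt Mt Mt2 hMt hMt2 hcM
    u v huv hF W hW φ hφ hex
  refine ⟨θ, ?_, hprob⟩
  calc |θ| ≤ C * (Δ ^ 4 / M ^ 2) := hθ
    _ ≤ C * (Δ ^ 5 * n / M ^ 3) := by gcongr C * ?_; exact pow_four_div_sq_le hM hd
    _ = C * Δ ^ 5 * n / M ^ 3 := by ring
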